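/- arXiv:1103.3893 — 5 statements merged into one kernel-verified Lean document; each statement's English description precedes it below -/
import Mathlib

section
/- The integral $\int_0^\pi \log^3(2\sin(\theta/2))\,d\theta = -\frac{3}{2}\pi\,\zeta(3)$, where $\zeta$ is the Riemann zeta function. -/
/-!
On the unit circle `log (1 - exp (iθ)) = log (2 sin (θ / 2)) + i (θ - π) / 2` for `0 < θ < 2π`.
By the mean value property the cube of `log (1 - z)` has integral zero over the circle, and the
real part of that identity reads `∫ log³ (2 sin (θ / 2)) = 3/4 ∫ log (2 sin (θ / 2)) (θ - π)²`.
Expanding `log (1 - z) = -∑ zⁿ / n` and using `∫ exp (inθ) (θ - π)² = 4π / n²`, one finds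
`∫ log (2 sin (θ / 2)) (θ - π)² = -4π ζ(3)`; the symmetry `θ ↦ 2π - θ` halves the interval.

The function `log (1 - z)` is singular at `z = 1`, so both integrals over the unit circle are limits
of integrals over circles of radius `r < 1`. Dominated convergence applies because
`|sin (θ / 2)| ≤ |1 - r exp (iθ)|`, which bounds every power of the logarithm by a multiple of
`1 + sin (θ / 2) ^ (-1/2)`; Abel's limit theorem takes the series to `r = 1`.
-/

open Real

open Filter MeasureTheory Set Topology
open scoped Nat

section Reflection

variable {E : Type*} [NormedAddCommGroup E] {f : ℝ → E} {a : ℝ}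

lemma intervalIntegrable_two_mul_of_reflect (hf : IntervalIntegrable f volume 0 a)
    (hsymm : ∀ x, f (2 * a - x) = f x) : IntervalIntegrable f volume 0 (2 * a) := by
  have hreflect := (hf.comp_sub_left (2 * a)).symm
  simp only [hsymm, sub_zero] at hreflect
  rw [two_mul, add_sub_cancel_right] at hreflect
  exact hf.trans (by rwa [two_mul])

lemma intervalIntegral_two_mul_of_reflect [NormedSpace ℝ E]
    (hf : IntervalIntegrable f volume 0 a) (hsymm : ∀ x, f (2 * a - x) = f x) :
    ∫ x in 0..2 * a, f x = (2 : ℝ) • ∫ x in 0..a, f x := by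
  have hreflect : ∫ x in a..2 * a, f x = ∫ x in 0..a, f x := by
    have h := intervalIntegral.integral_comp_sub_left (a := 0) (b := a) f (2 * a)
    simp only [hsymm, sub_zero] at h
    rw [h, two_mul, add_sub_cancel_right]
  have hf' : IntervalIntegrable f volume a (2 * a) :=
    hf.symm.trans (intervalIntegrable_two_mul_of_reflect hf hsymm)
  rw [← intervalIntegral.integral_add_adjacent_intervals hf hf', hreflect, two_smul]

end Reflection

lemma intervalIntegrable_sin_rpow {p : ℝ} (hp : -1 < p) :
    IntervalIntegrable (fun x ↦ sin x ^ p) volume 0 π := by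
  rcases le_total 0 p with hp0 | hp0
  · exact (continuous_sin.rpow_const fun _ ↦ .inr hp0).intervalIntegrable _ _
  have hhalf : IntervalIntegrable (fun x ↦ sin x ^ p) volume 0 (π / 2) := by
    have hpow : IntervalIntegrable (fun x ↦ (2 / π) ^ p * x ^ p) volume 0 (π / 2) :=
      (intervalIntegral.intervalIntegrable_rpow' hp).const_mul _
    refine hpow.mono_fun' (measurable_sin.pow_const p).aestronglyMeasurable ?_
    rw [uIoc_of_le (by positivity)]
    filter_upwards [ae_restrict_mem measurableSet_Ioc] with x ⟨hx0, hx⟩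
    have hjordan : 2 / π * x ≤ sin x := mul_le_sin hx0.le hx
    have hpos : 0 < 2 / π * x := by positivity
    rw [norm_of_nonneg (rpow_nonneg (hpos.le.trans hjordan) p),
      ← mul_rpow (by positivity) hx0.le]
    exact rpow_le_rpow_of_nonpos hpos hjordan hp0
  have hfull := intervalIntegrable_two_mul_of_reflect hhalf fun x ↦ by
    rw [mul_div_cancel₀ π two_ne_zero, sin_pi_sub]
  rwa [mul_div_cancel₀ π two_ne_zero] at hfull

lemma ae_mem_Ioo_of_mem_uIoc {a b : ℝ} (hab : a ≤ b) :
    ∀ᵐ x : ℝ, x ∈ uIoc a b → x ∈ Ioo a b := by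
  filter_upwards [Measure.ae_ne volume b] with x hxb hx
  rw [uIoc_of_le hab] at hx
  exact ⟨hx.1, hx.2.lt_of_ne hxb⟩

-- `x ^ k / k! ≤ exp x` at `x = ε * ‖log w‖`, where `‖log w‖ ≤ |log ‖w‖| + π`.
lemma norm_log_pow_le {w : ℂ} (hw : w ≠ 0) {ε : ℝ} (hε : 0 < ε) (k : ℕ) :
    ‖Complex.log w‖ ^ k ≤ k ! / ε ^ k * exp (ε * π) * (‖w‖ ^ ε + ‖w‖ ^ (-ε)) := by
  have hnorm : ‖Complex.log w‖ ≤ |log ‖w‖| + π := by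
    refine (Complex.norm_le_abs_re_add_abs_im _).trans ?_
    rw [Complex.log_re, Complex.log_im]
    gcongr
    exact Complex.abs_arg_le_pi w
  have hexp : exp (ε * |log ‖w‖|) ≤ ‖w‖ ^ ε + ‖w‖ ^ (-ε) := by
    have hw' : 0 < ‖w‖ := norm_pos_iff.2 hw
    rw [rpow_def_of_pos hw', rpow_def_of_pos hw', mul_neg, mul_comm _ ε]
    simpa only [abs_mul, abs_of_pos hε] using exp_abs_le (ε * log ‖w‖)
  calc ‖Complex.log w‖ ^ k = k ! / ε ^ k * ((ε * ‖Complex.log w‖) ^ k / k !) := by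
        rw [mul_pow]
        field_simp
    _ ≤ k ! / ε ^ k * exp (ε * ‖Complex.log w‖) := by
        gcongr
        exact pow_div_factorial_le_exp _ (by positivity) k
    _ ≤ k ! / ε ^ k * (exp (ε * π) * exp (ε * |log ‖w‖|)) := by
        rw [← exp_add, ← mul_add, add_comm π]
        gcongr
    _ ≤ k ! / ε ^ k * exp (ε * π) * (‖w‖ ^ ε + ‖w‖ ^ (-ε)) := by
        rw [mul_assoc]
        gcongr

lemma norm_one_sub_circleMap_sq (r θ : ℝ) :
    ‖1 - circleMap 0 r θ‖ ^ 2 = (1 - r) ^ 2 + 4 * r * sin (θ / 2) ^ 2 := by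
  have hcos : cos θ = 1 - 2 * sin (θ / 2) ^ 2 := by
    rw [sin_sq_eq_half_sub, mul_div_cancel₀ θ two_ne_zero]
    ring
  rw [Complex.sq_norm, Complex.normSq_apply, Complex.sub_re, Complex.sub_im, circleMap_zero_re,
    circleMap_zero_im, Complex.one_re, Complex.one_im]
  linear_combination r ^ 2 * sin_sq_add_cos_sq θ - 2 * r * hcos

lemma abs_sin_half_le_norm_one_sub_circleMap {r : ℝ} (hr : 0 ≤ r) (θ : ℝ) :
    |sin (θ / 2)| ≤ ‖1 - circleMap 0 r θ‖ := by
  rw [← abs_of_nonneg (norm_nonneg (1 - circleMap 0 r θ)), ← sq_le_sq,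
    norm_one_sub_circleMap_sq]
  have hle_one := sin_sq_le_one (θ / 2)
  rcases le_total (sin (θ / 2) ^ 2) (3 / 4) with hs | hs
  · nlinarith [sq_nonneg (r - 1 + 2 * sin (θ / 2) ^ 2), sq_nonneg (sin (θ / 2))]
  · nlinarith

lemma sin_half_pos {θ : ℝ} (hθ : θ ∈ Ioo 0 (2 * π)) : 0 < sin (θ / 2) :=
  sin_pos_of_pos_of_lt_pi (by linarith [hθ.1]) (by linarith [hθ.2])

lemma intervalIntegrable_sin_half_rpow {p : ℝ} (hp : -1 < p) :
    IntervalIntegrable (fun θ ↦ sin (θ / 2) ^ p) volume 0 (2 * π) := by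
  simpa [div_eq_inv_mul, mul_comm π] using
    (intervalIntegrable_sin_rpow hp).comp_mul_left (c := 2⁻¹)

lemma exists_intervalIntegrable_norm_log_one_sub_circleMap_pow_le (k : ℕ) :
    ∃ B : ℝ → ℝ, IntervalIntegrable B volume 0 (2 * π) ∧
      ∀ r ∈ Icc (0 : ℝ) 1, ∀ θ ∈ Ioo 0 (2 * π),
        ‖Complex.log (1 - circleMap 0 r θ) ^ k‖ ≤ B θ := by
  refine ⟨fun θ ↦ k ! / (1 / 2) ^ k * exp (1 / 2 * π) *
      (2 ^ (1 / 2 : ℝ) + sin (θ / 2) ^ (-(1 / 2) : ℝ)),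
    (intervalIntegrable_const.add
      (intervalIntegrable_sin_half_rpow (by norm_num))).const_mul _, fun r hr θ hθ ↦ ?_⟩
  have hlower : sin (θ / 2) ≤ ‖1 - circleMap 0 r θ‖ :=
    (le_abs_self _).trans (abs_sin_half_le_norm_one_sub_circleMap hr.1 θ)
  have hupper : ‖1 - circleMap 0 r θ‖ ≤ 2 := by
    refine (norm_sub_le _ _).trans ?_
    rw [norm_one, norm_circleMap_zero, abs_of_nonneg hr.1]
    linarith [hr.2]
  have hne : 1 - circleMap 0 r θ ≠ 0 := norm_pos_iff.1 ((sin_half_pos hθ).trans_le hlower)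
  rw [norm_pow]
  refine (norm_log_pow_le hne one_half_pos k).trans ?_
  beta_reduce
  gcongr _ * (?_ + ?_)
  · gcongr
  · exact rpow_le_rpow_of_nonpos (sin_half_pos hθ) hlower (by norm_num)

lemma measurable_log_one_sub_circleMap (r : ℝ) :
    Measurable fun θ ↦ Complex.log (1 - circleMap 0 r θ) :=
  Complex.measurable_log.comp (by fun_prop)

lemma intervalIntegrable_log_one_sub_circleMap_pow {r : ℝ} (hr : r ∈ Icc 0 1) (k : ℕ) :
    IntervalIntegrable (fun θ ↦ Complex.log (1 - circleMap 0 r θ) ^ k) volume 0 (2 * π) := by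
  obtain ⟨B, hB, hle⟩ := exists_intervalIntegrable_norm_log_one_sub_circleMap_pow_le k
  refine hB.mono_fun' ((measurable_log_one_sub_circleMap r).pow_const k).aestronglyMeasurable
    ((ae_restrict_iff' measurableSet_uIoc).2 ?_)
  filter_upwards [ae_mem_Ioo_of_mem_uIoc two_pi_pos.le] with θ hθ hmem
  exact hle r hr θ (hθ hmem)

lemma one_sub_circleMap_one_mem_slitPlane {θ : ℝ} (hθ : θ ∈ Ioo 0 (2 * π)) :
    1 - circleMap 0 1 θ ∈ Complex.slitPlane := by
  have hcos : cos θ ≠ 1 := fun h ↦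
    hθ.1.ne' ((cos_eq_one_iff_of_lt_of_lt (by linarith [hθ.1, pi_pos]) hθ.2).1 h)
  left
  rw [Complex.sub_re, Complex.one_re, circleMap_zero_re, one_mul, sub_pos]
  exact (cos_le_one θ).lt_of_ne hcos

lemma tendsto_integral_log_one_sub_circleMap_pow_mul (k : ℕ) {g : ℝ → ℂ} (hg : Continuous g) :
    Tendsto (fun r ↦ ∫ θ in 0..2 * π, Complex.log (1 - circleMap 0 r θ) ^ k * g θ) (𝓝[<] 1)
      (𝓝 (∫ θ in 0..2 * π, Complex.log (1 - circleMap 0 1 θ) ^ k * g θ)) := by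
  obtain ⟨B, hB, hle⟩ := exists_intervalIntegrable_norm_log_one_sub_circleMap_pow_le k
  refine intervalIntegral.tendsto_integral_filter_of_dominated_convergence
    (fun θ ↦ B θ * ‖g θ‖) (.of_forall fun r ↦ ?_) ?_
    (hB.mul_continuousOn hg.norm.continuousOn) ?_
  · exact (((measurable_log_one_sub_circleMap r).pow_const k).mul
      hg.measurable).aestronglyMeasurable
  · filter_upwards [Ioo_mem_nhdsLT one_pos] with r hr
    filter_upwards [ae_mem_Ioo_of_mem_uIoc two_pi_pos.le] with θ hθ hmem
    rw [norm_mul]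
    gcongr
    exact hle r (Ioo_subset_Icc_self hr) θ (hθ hmem)
  · filter_upwards [ae_mem_Ioo_of_mem_uIoc two_pi_pos.le] with θ hθ hmem
    have hlog : ContinuousAt (fun r ↦ Complex.log (1 - circleMap 0 r θ)) 1 := by
      refine ContinuousAt.clog ?_ (one_sub_circleMap_one_mem_slitPlane (hθ hmem))
      simp only [circleMap_zero]
      fun_prop
    exact ((hlog.pow k).mul_const (g θ)).tendsto.mono_left nhdsWithin_le_nhds

lemma circleAverage_log_one_sub_pow {r : ℝ} (hr : |r| < 1) {k : ℕ} (hk : k ≠ 0) :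
    circleAverage (fun z ↦ Complex.log (1 - z) ^ k) 0 r = 0 := by
  have hdiff : DifferentiableOn ℂ (fun z : ℂ ↦ Complex.log (1 - z) ^ k) (Metric.ball 0 1) := by
    intro z hz
    have hslit : 1 - z ∈ Complex.slitPlane := by
      rw [sub_eq_add_neg]
      exact Complex.mem_slitPlane_of_norm_lt_one (by simpa using hz)
    exact (((differentiableAt_id.const_sub 1).clog hslit).pow k).differentiableWithinAt
  have hmean := (hdiff.mono
    ((Metric.closure_ball_subset_closedBall).trans
      (Metric.closedBall_subset_ball hr))).diffContOnCl.circleAverage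
  simpa [hk] using hmean

lemma integral_log_one_sub_circleMap_one_pow {k : ℕ} (hk : k ≠ 0) :
    ∫ θ in 0..2 * π, Complex.log (1 - circleMap 0 1 θ) ^ k = 0 := by
  have hlim := tendsto_integral_log_one_sub_circleMap_pow_mul k (continuous_const (y := 1))
  simp only [mul_one] at hlim
  refine tendsto_nhds_unique_of_eventuallyEq hlim tendsto_const_nhds ?_
  filter_upwards [Ioo_mem_nhdsLT (show (-1 : ℝ) < 1 by norm_num)] with r hr
  simpa [circleAverage_def, pi_ne_zero] using circleAverage_log_one_sub_pow (abs_lt.2 hr) hk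

lemma hasSum_integral_log_one_sub_circleMap_mul {r : ℝ} (hr : |r| < 1) {g : ℝ → ℂ}
    (hg : Continuous g) (a b : ℝ) :
    HasSum (fun n : ℕ ↦ (∫ θ in a..b, circleMap 0 1 θ ^ n * g θ) / n * (r : ℂ) ^ n)
      (-∫ θ in a..b, Complex.log (1 - circleMap 0 r θ) * g θ) := by
  have hterm (n : ℕ) : (∫ θ in a..b, circleMap 0 1 θ ^ n * g θ) / n * (r : ℂ) ^ n =
      ∫ θ in a..b, circleMap 0 r θ ^ n / n * g θ := by
    rw [div_mul_eq_mul_div, mul_div_assoc, ← intervalIntegral.integral_mul_const]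
    refine intervalIntegral.integral_congr fun θ _ ↦ ?_
    simp only [circleMap_zero, Complex.ofReal_one, one_mul, mul_pow]
    ring
  simp only [hterm, ← intervalIntegral.integral_neg, ← neg_mul]
  have hgeom := summable_geometric_of_lt_one (abs_nonneg r) hr
  refine intervalIntegral.hasSum_integral_of_dominated_convergence (fun n θ ↦ |r| ^ n * ‖g θ‖)
    (fun n ↦ by fun_prop) (fun n ↦ .of_forall fun θ _ ↦ ?_)
    (.of_forall fun θ _ ↦ hgeom.mul_right _) ?_ (.of_forall fun θ _ ↦ ?_)
  · rw [norm_mul, norm_div, norm_pow, norm_circleMap_zero, Complex.norm_natCast]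
    gcongr
    rcases Nat.eq_zero_or_pos n with rfl | hn
    · simp
    · exact div_le_self (by positivity) (mod_cast hn)
  · simp only [tsum_mul_right]
    exact Continuous.intervalIntegrable (by fun_prop) a b
  · exact (Complex.hasSum_taylorSeries_neg_log (by rwa [norm_circleMap_zero])).mul_right (g θ)

lemma integral_log_one_sub_circleMap_one_mul {g : ℝ → ℂ} (hg : Continuous g) {s : ℂ}
    (hs : Tendsto (fun N ↦ ∑ n ∈ Finset.range N,
      (∫ θ in 0..2 * π, circleMap 0 1 θ ^ n * g θ) / n) atTop (𝓝 s)) :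
    ∫ θ in 0..2 * π, Complex.log (1 - circleMap 0 1 θ) * g θ = -s := by
  have hlim := tendsto_integral_log_one_sub_circleMap_pow_mul 1 hg
  simp only [pow_one] at hlim
  refine tendsto_nhds_unique_of_eventuallyEq hlim
    (tendsto_map'_iff.1 (Complex.tendsto_tsum_powerSeries_nhdsWithin_lt hs)).neg ?_
  filter_upwards [Ioo_mem_nhdsLT (show (-1 : ℝ) < 1 by norm_num)] with r hr
  exact neg_eq_iff_eq_neg.1
    (hasSum_integral_log_one_sub_circleMap_mul (abs_lt.2 hr) hg 0 (2 * π)).tsum_eq.symm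

lemma hasDerivAt_exp_mul_quadratic {c : ℂ} (hc : c ≠ 0) (a x : ℝ) :
    HasDerivAt (fun x : ℝ ↦ Complex.exp (c * x) *
        ((x - a : ℂ) ^ 2 / c - 2 * (x - a) / c ^ 2 + 2 / c ^ 3))
      (Complex.exp (c * x) * (x - a) ^ 2) x := by
  have hcast : HasDerivAt (fun x : ℝ ↦ (x : ℂ)) 1 x := Complex.ofRealCLM.hasDerivAt
  have hsub := hcast.sub_const (a : ℂ)
  have h := (hcast.const_mul c).cexp.mul
    ((((hsub.pow 2).div_const c).sub ((hsub.const_mul 2).div_const (c ^ 2))).add_const (2 / c ^ 3))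
  refine h.congr_deriv ?_
  simp only [Pi.sub_apply, Pi.pow_apply, mul_one, pow_one, Nat.cast_ofNat, Nat.add_one_sub_one]
  field_simp
  ring

lemma integral_circleMap_one_pow_mul_sub_pi_sq {n : ℕ} (hn : n ≠ 0) :
    ∫ θ in 0..2 * π, circleMap 0 1 θ ^ n * ((θ : ℂ) - π) ^ 2 = 4 * π / (n : ℂ) ^ 2 := by
  have hn' : (n : ℂ) ≠ 0 := Nat.cast_ne_zero.2 hn
  have hc : (n * Complex.I : ℂ) ≠ 0 := mul_ne_zero hn' Complex.I_ne_zero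
  have hpow (θ : ℝ) : circleMap 0 1 θ ^ n = Complex.exp (n * Complex.I * θ) := by
    rw [circleMap_zero, Complex.ofReal_one, one_mul, ← Complex.exp_nat_mul]
    ring_nf
  have hperiod : Complex.exp (n * Complex.I * (2 * π : ℝ)) = 1 := by
    rw [← Complex.exp_nat_mul_two_pi_mul_I n]
    push_cast
    ring_nf
  simp only [hpow]
  rw [intervalIntegral.integral_eq_sub_of_hasDerivAt
    (fun θ _ ↦ hasDerivAt_exp_mul_quadratic hc π θ)
    (Continuous.intervalIntegrable (by fun_prop) _ _), hperiod, Complex.ofReal_zero, mul_zero,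
    Complex.exp_zero, mul_pow _ Complex.I 2, Complex.I_sq]
  push_cast
  field_simp
  ring

lemma integral_log_one_sub_circleMap_one_mul_sub_pi_sq :
    ∫ θ in 0..2 * π, Complex.log (1 - circleMap 0 1 θ) * ((θ : ℂ) - π) ^ 2 =
      -(4 * π * riemannZeta 3) := by
  have hterm (n : ℕ) : (∫ θ in 0..2 * π, circleMap 0 1 θ ^ n * ((θ : ℂ) - π) ^ 2) / n =
      4 * π * (1 / (n : ℂ) ^ 3) := by
    rcases eq_or_ne n 0 with rfl | hn
    · simp
    · rw [integral_circleMap_one_pow_mul_sub_pi_sq hn]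
      field_simp
  have hsum : Summable fun n : ℕ ↦ 1 / (n : ℂ) ^ 3 := by
    simpa using Complex.summable_ofReal.2
      (summable_one_div_nat_pow.2 (show 1 < 3 by norm_num))
  have hzeta : HasSum (fun n : ℕ ↦ 1 / (n : ℂ) ^ 3) (riemannZeta 3) := by
    have h := zeta_nat_eq_tsum_of_gt_one (show 1 < 3 by norm_num)
    rw [Nat.cast_ofNat] at h
    exact h ▸ hsum.hasSum
  apply integral_log_one_sub_circleMap_one_mul (by fun_prop)
  simp only [hterm]
  exact (hzeta.mul_left _).tendsto_sum_nat

lemma log_one_sub_circleMap_one {θ : ℝ} (hθ : θ ∈ Ioo 0 (2 * π)) :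
    Complex.log (1 - circleMap 0 1 θ) =
      (log (2 * sin (θ / 2)) : ℝ) + ((θ - π) / 2 : ℝ) * Complex.I := by
  have hpolar : 1 - circleMap 0 1 θ =
      (2 * sin (θ / 2) : ℝ) * Complex.exp (((θ - π) / 2 : ℝ) * Complex.I) := by
    have hcos : cos ((θ - π) / 2) = sin (θ / 2) := by rw [sub_div, cos_sub_pi_div_two]
    have hsin : sin ((θ - π) / 2) = -cos (θ / 2) := by rw [sub_div, sin_sub_pi_div_two]
    have hsq := sin_sq_eq_half_sub (θ / 2)
    have hdouble := sin_two_mul (θ / 2)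
    rw [mul_div_cancel₀ θ two_ne_zero] at hsq hdouble
    apply Complex.ext
    · rw [Complex.re_ofReal_mul, Complex.exp_ofReal_mul_I_re, hcos, Complex.sub_re,
        circleMap_zero_re, Complex.one_re]
      linarith
    · rw [Complex.im_ofReal_mul, Complex.exp_ofReal_mul_I_im, hsin, Complex.sub_im,
        circleMap_zero_im, Complex.one_im]
      linarith
  have hpos : 0 < 2 * sin (θ / 2) := mul_pos two_pos (sin_half_pos hθ)
  rw [hpolar, Complex.log_ofReal_mul hpos (Complex.exp_ne_zero _), Complex.log_exp]
  · simp only [Complex.im_ofReal_mul, Complex.I_im]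
    linarith [hθ.1, pi_pos]
  · simp only [Complex.im_ofReal_mul, Complex.I_im]
    linarith [hθ.2, pi_pos]

-- `(L + i a)³ + 3 (L + i a) a² = L³ + i (3 L² a + 2 a³)` with `a = (θ - π) / 2`.
lemma re_log_one_sub_circleMap_one_cube {θ : ℝ} (hθ : θ ∈ Ioo 0 (2 * π)) :
    (Complex.log (1 - circleMap 0 1 θ) ^ 3 +
      3 / 4 * (Complex.log (1 - circleMap 0 1 θ) * ((θ : ℂ) - π) ^ 2)).re =
        log (2 * sin (θ / 2)) ^ 3 := by
  rw [log_one_sub_circleMap_one hθ]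
  set L := log (2 * sin (θ / 2))
  set a := (θ - π) / 2 with ha
  have hθa : (θ : ℂ) - π = 2 * a := by
    rw [ha]
    push_cast
    ring
  have hcube : ((L : ℂ) + a * Complex.I) ^ 3 + 3 / 4 * ((L + a * Complex.I) * (2 * a) ^ 2) =
      (L ^ 3 : ℝ) + (3 * L ^ 2 * a + 2 * a ^ 3 : ℝ) * Complex.I := by
    push_cast
    linear_combination (3 * L * a ^ 2 + a ^ 3 * Complex.I : ℂ) * Complex.I_sq
  rw [hθa, hcube, Complex.add_re, Complex.re_ofReal_mul, Complex.I_re, mul_zero, add_zero,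
    Complex.ofReal_re]

lemma intervalIntegrable_log_two_mul_sin_half_pow (k : ℕ) :
    IntervalIntegrable (fun θ ↦ log (2 * sin (θ / 2)) ^ k) volume 0 (2 * π) := by
  refine (intervalIntegrable_log_one_sub_circleMap_pow
    (right_mem_Icc.2 zero_le_one) k).norm.mono_fun'
    (Measurable.aestronglyMeasurable (by fun_prop)) ((ae_restrict_iff' measurableSet_uIoc).2 ?_)
  filter_upwards [ae_mem_Ioo_of_mem_uIoc two_pi_pos.le] with θ hθ hmem
  have hre : (Complex.log (1 - circleMap 0 1 θ)).re = log (2 * sin (θ / 2)) := by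
    rw [log_one_sub_circleMap_one (hθ hmem), Complex.add_re, Complex.ofReal_re,
      Complex.re_ofReal_mul, Complex.I_re, mul_zero, add_zero]
  rw [norm_pow, norm_pow, ← hre]
  gcongr
  exact Complex.abs_re_le_norm _

lemma integral_log_two_mul_sin_half_cube :
    ∫ θ in 0..2 * π, log (2 * sin (θ / 2)) ^ 3 = -(3 * π) * (riemannZeta 3).re := by
  have hmem : (1 : ℝ) ∈ Icc 0 1 := right_mem_Icc.2 zero_le_one
  have hcube := intervalIntegrable_log_one_sub_circleMap_pow hmem 3
  have hmul : IntervalIntegrable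
      (fun θ ↦ 3 / 4 * (Complex.log (1 - circleMap 0 1 θ) * ((θ : ℂ) - π) ^ 2))
      volume 0 (2 * π) := by
    have hlog := intervalIntegrable_log_one_sub_circleMap_pow hmem 1
    simp only [pow_one] at hlog
    exact (hlog.mul_continuousOn (g := fun θ : ℝ ↦ ((θ : ℂ) - π) ^ 2) (by fun_prop)).const_mul _
  calc ∫ θ in 0..2 * π, log (2 * sin (θ / 2)) ^ 3
      = ∫ θ in 0..2 * π, (Complex.log (1 - circleMap 0 1 θ) ^ 3 +
          3 / 4 * (Complex.log (1 - circleMap 0 1 θ) * ((θ : ℂ) - π) ^ 2)).re :=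
        (intervalIntegral.integral_congr_Ioo_of_le two_pi_pos.le fun _ hθ ↦
          re_log_one_sub_circleMap_one_cube hθ).symm
    _ = (∫ θ in 0..2 * π, (Complex.log (1 - circleMap 0 1 θ) ^ 3 +
          3 / 4 * (Complex.log (1 - circleMap 0 1 θ) * ((θ : ℂ) - π) ^ 2))).re :=
        intervalIntegral.intervalIntegral_re (hcube.add hmul)
    _ = -(3 * π) * (riemannZeta 3).re := by
        rw [intervalIntegral.integral_add hcube hmul,
          intervalIntegral.integral_const_mul,
          integral_log_one_sub_circleMap_one_pow three_ne_zero,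
          integral_log_one_sub_circleMap_one_mul_sub_pi_sq, zero_add,
          show (3 / 4 * -(4 * π * riemannZeta 3) : ℂ) = (-(3 * π) : ℝ) * riemannZeta 3 by
            push_cast; ring, Complex.re_ofReal_mul]

theorem ls4_pi :
    ((∫ θ in (0:ℝ)..π, (Real.log (2 * Real.sin (θ/2)))^3 : ℝ) : ℂ) =
      -(3/2) * (π : ℂ) * riemannZeta 3 := by
  have hint : IntervalIntegrable (fun θ ↦ log (2 * sin (θ / 2)) ^ 3) volume 0 π :=
    (intervalIntegrable_log_two_mul_sin_half_pow 3).mono_set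
      (uIcc_subset_uIcc_left (mem_uIcc_of_le pi_pos.le (by linarith [pi_pos])))
  have hreflect := intervalIntegral_two_mul_of_reflect hint fun θ ↦ by
    rw [sub_div, mul_div_cancel_left₀ π two_ne_zero, sin_pi_sub]
  rw [integral_log_two_mul_sin_half_cube, smul_eq_mul] at hreflect
  have hhalf : ∫ θ in 0..π, log (2 * sin (θ / 2)) ^ 3 = -(3 / 2) * π * (riemannZeta 3).re := by
    linarith
  have hreal : ((riemannZeta 3).re : ℂ) = riemannZeta 3 := by
    rw [← Complex.conj_eq_iff_re, ← riemannZeta_conj, map_ofNat]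
  rw [hhalf]
  push_cast
  rw [hreal]
end

section
/- The integral $\int_0^{\pi/3} \log^2(2\sin(\theta/2))\,d\theta = \frac{7}{108}\pi^3$. -/
open Real

/-!
Let `F` be a primitive of `log² w / (1 - w)` on the disc `|w - 2| < 2`. Apart from its vertex `0`,
this disc contains the curved triangle bounded by the real segment `[0, 1]`, the arc of the unit
circle from `1` to `e^{iπ/3}`, and the arc of the circle `|w - 1| = 1` from `e^{iπ/3}` back to `0`.
Follow `Im F` along the three sides.
It is constant on the segment, where the integrand is real.
On the unit circle `log w = iφ` and `Re (w / (1 - w)) = -1/2`, so `Im F` has derivative `φ² / 2`.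
On the last circle `w = 1 + e^{2iα} = 2 cos α · e^{iα}`, so `Im F` has derivative
`2 (α² - log² (2 cos α))`, which is where the integral appears after `θ = π - 2α`.
The singularity at `0` is harmless since `r log² r → 0`.
-/

open Set Filter Topology Metric

theorem intervalIntegral_eq_sub_of_hasDerivAt_of_nonneg_of_tendsto {f f' : ℝ → ℝ} {a b fa fb : ℝ}
    (hab : a < b) (hderiv : ∀ x ∈ Ioo a b, HasDerivAt f (f' x) x) (hf' : ∀ x ∈ Ioo a b, 0 ≤ f' x)
    (ha : Tendsto f (𝓝[>] a) (𝓝 fa)) (hb : Tendsto f (𝓝[<] b) (𝓝 fb)) :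
    ∫ x in a..b, f' x = fb - fa := by
  refine intervalIntegral.integral_eq_sub_of_hasDerivAt_of_tendsto hab hderiv ?_ ha hb
  have hcont : ContinuousOn (extendFrom (Ioo a b) f) (Icc a b) :=
    continuousOn_Icc_extendFrom_Ioo (HasDerivAt.continuousOn hderiv) ha hb
  have hderiv' : ∀ x ∈ Ioo a b, HasDerivAt (extendFrom (Ioo a b) f) (f' x) x := fun x hx ↦
    (hderiv x hx).congr_of_eventuallyEq <| by
      filter_upwards [isOpen_Ioo.mem_nhds hx] with y hy
      exact extendFrom_eq (subset_closure hy) (hderiv y hy).continuousAt.continuousWithinAt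
  exact (intervalIntegrable_iff_integrableOn_Ioc_of_le hab.le).2
    (intervalIntegral.integrableOn_deriv_of_nonneg hcont hderiv' hf')

theorem hasDerivAt_im_comp {F : ℂ → ℂ} {γ : ℝ → ℂ} {F' γ' : ℂ} {t : ℝ}
    (hF : HasDerivAt F F' (γ t)) (hγ : HasDerivAt γ γ' t) :
    HasDerivAt (fun s ↦ (F (γ s)).im) (F' * γ').im t := by
  simpa [Function.comp_def, mul_comm] using
    Complex.imCLM.hasFDerivAt.comp_hasDerivAt t (hF.scomp t hγ)

theorem tendsto_mul_abs_log_add_sq_nhdsGT_zero (c : ℝ) :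
    Tendsto (fun r : ℝ ↦ r * (|log r| + c) ^ 2) (𝓝[>] 0) (𝓝 0) := by
  have hlog : Tendsto (fun r : ℝ ↦ |log r * r ^ (1 / 2 : ℝ)|) (𝓝[>] 0) (𝓝 0) := by
    simpa using (tendsto_log_mul_rpow_nhdsGT_zero (r := 1 / 2) (by norm_num)).abs
  have hsqrt : Tendsto (fun r : ℝ ↦ c * √r) (𝓝[>] 0) (𝓝 0) := by
    simpa using ((continuous_sqrt.tendsto 0).const_mul c).mono_left nhdsWithin_le_nhds
  have hsq : Tendsto (fun r : ℝ ↦ (|log r * r ^ (1 / 2 : ℝ)| + c * √r) ^ 2) (𝓝[>] 0) (𝓝 0) := by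
    simpa using (hlog.add hsqrt).pow 2
  refine hsq.congr' ?_
  filter_upwards [self_mem_nhdsWithin] with r (hr : 0 < r)
  rw [← sqrt_eq_rpow, abs_mul, abs_of_nonneg (sqrt_nonneg r), ← add_mul, mul_pow, sq_sqrt hr.le,
    mul_comm]

theorem re_div_one_sub_of_norm_eq_one {w : ℂ} (hw : ‖w‖ = 1) (hw1 : w ≠ 1) :
    (w / (1 - w)).re = -1 / 2 := by
  have hsq : w.re * w.re + w.im * w.im = 1 := by
    rw [← Complex.normSq_apply, Complex.normSq_eq_norm_sq, hw, one_pow]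
  have hnormSq : Complex.normSq (1 - w) = 2 * (1 - w.re) := by
    simp only [Complex.normSq_apply, Complex.sub_re, Complex.sub_im, Complex.one_re, Complex.one_im]
    linarith
  have hne : 2 * (1 - w.re) ≠ 0 := hnormSq ▸ Complex.normSq_eq_zero.not.2 (sub_ne_zero.2 hw1.symm)
  rw [Complex.div_re, hnormSq, ← add_div, div_eq_iff hne]
  simp only [Complex.sub_re, Complex.sub_im, Complex.one_re, Complex.one_im]
  linarith

theorem circleMap_zero_mem_ball_iff {r R φ : ℝ} (hr : 0 < r) (hR : 0 ≤ R) :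
    circleMap 0 r φ ∈ ball (R : ℂ) R ↔ r < 2 * R * cos φ := by
  have hsq : ‖circleMap 0 r φ - R‖ ^ 2 = R ^ 2 + r * (r - 2 * R * cos φ) := by
    rw [Complex.sq_norm, Complex.normSq_apply]
    simp only [Complex.sub_re, Complex.sub_im, circleMap_zero_re, circleMap_zero_im,
      Complex.ofReal_re, Complex.ofReal_im]
    linear_combination r ^ 2 * sin_sq_add_cos_sq φ
  rw [mem_ball_iff_norm, ← sq_lt_sq₀ (norm_nonneg _) hR, hsq, add_lt_iff_neg_left,
    ← sub_neg (a := r)]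
  exact smul_neg_iff_of_pos_left hr

theorem log_circleMap_zero {r φ : ℝ} (hr : 0 < r) (hφ : φ ∈ Ioc (-π) π) :
    Complex.log (circleMap 0 r φ) = log r + φ * Complex.I := by
  rw [circleMap_zero, Complex.log_ofReal_mul hr (Complex.exp_ne_zero _),
    Complex.log_exp (by simpa using hφ.1) (by simpa using hφ.2)]

theorem circleMap_one_one_two_mul (α : ℝ) :
    circleMap 1 1 (2 * α) = circleMap 0 (2 * cos α) α := by
  have hdouble : ((2 * α : ℝ) : ℂ) * Complex.I = α * Complex.I + α * Complex.I := by
    push_cast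
    ring
  rw [circleMap, circleMap_zero, hdouble, Complex.ofReal_one, one_mul, Complex.ofReal_mul,
    Complex.ofReal_ofNat, Complex.ofReal_cos, Complex.two_cos, add_mul, ← Complex.exp_add,
    ← Complex.exp_add, neg_mul, neg_add_cancel, Complex.exp_zero, add_comm]

/-- The function `log² w / (1 - w)`, extended holomorphically by `0` to `w = 1`: the factor
`log w / (w - 1)` is encoded as the slope of `log` at `1`. -/
noncomputable def logSqDivOneSub (w : ℂ) : ℂ := -Complex.log w * dslope Complex.log 1 w

namespace logSqDivOneSub

theorem of_ne {w : ℂ} (hw : w ≠ 1) : logSqDivOneSub w = Complex.log w ^ 2 / (1 - w) := by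
  rw [logSqDivOneSub, dslope_of_ne _ hw, slope_def_field, Complex.log_one, sub_zero,
    ← neg_sub w 1, div_neg]
  ring

theorem apply_one : logSqDivOneSub 1 = 0 := by
  simp [logSqDivOneSub]

theorem exists_primitive :
    ∃ F : ℂ → ℂ, ∀ w ∈ ball (2 : ℂ) 2, HasDerivAt F (logSqDivOneSub w) w := by
  have hlog : DifferentiableOn ℂ Complex.log (ball (2 : ℂ) 2) := by
    refine differentiableOn_id.clog fun w hw ↦ Or.inl ?_
    have hre := (abs_lt.1 ((Complex.abs_re_le_norm (w - 2)).trans_lt (mem_ball_iff_norm.1 hw))).1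
    rw [Complex.sub_re, Complex.re_ofNat] at hre
    simpa using hre
  have hone : ball (2 : ℂ) 2 ∈ 𝓝 1 := isOpen_ball.mem_nhds <| by
    rw [mem_ball_iff_norm]
    norm_num
  exact (hlog.neg.mul ((Complex.differentiableOn_dslope hone).2 hlog)).isExactOn_ball

theorem im_ofReal {x : ℝ} (hx : 0 ≤ x) : (logSqDivOneSub x).im = 0 := by
  rcases eq_or_ne x 1 with rfl | hx1
  · simp [apply_one]
  · rw [of_ne (by exact_mod_cast hx1), ← Complex.ofReal_log hx]
    norm_cast

theorem im_mul_deriv_unitCircle {φ : ℝ} (hφ : φ ∈ Ioc (-π) π) :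
    (logSqDivOneSub (circleMap 0 1 φ) * (circleMap 0 1 φ * Complex.I)).im = φ ^ 2 / 2 := by
  have hlog : Complex.log (circleMap 0 1 φ) = φ * Complex.I := by
    simp [log_circleMap_zero one_pos hφ]
  rcases eq_or_ne (circleMap 0 1 φ) 1 with h1 | h1
  · have hφ0 : φ = 0 := by simpa [h1, Complex.log_one] using hlog
    rw [h1, apply_one, hφ0]
    simp
  · have hre := re_div_one_sub_of_norm_eq_one (by simp) h1
    have hmul : logSqDivOneSub (circleMap 0 1 φ) * (circleMap 0 1 φ * Complex.I) =
        ((-φ ^ 2 : ℝ) : ℂ) * (circleMap 0 1 φ / (1 - circleMap 0 1 φ) * Complex.I) := by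
      rw [of_ne h1, hlog, mul_pow, Complex.I_sq]
      push_cast
      ring
    rw [hmul, Complex.im_ofReal_mul, Complex.mul_I_im, hre]
    ring

theorem im_mul_deriv_circle_one_one {α : ℝ} (hα : α ∈ Ioo (-(π / 2)) (π / 2)) :
    (logSqDivOneSub (circleMap 1 1 (2 * α)) * (2 * (circleMap 0 1 (2 * α) * Complex.I))).im =
      2 * (α ^ 2 - log (2 * cos α) ^ 2) := by
  have hcos : 0 < 2 * cos α := mul_pos two_pos (cos_pos_of_mem_Ioo hα)
  have hlog : Complex.log (circleMap 1 1 (2 * α)) = log (2 * cos α) + α * Complex.I := by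
    rw [circleMap_one_one_two_mul]
    exact log_circleMap_zero hcos ⟨by linarith [hα.1, pi_pos], by linarith [hα.2, pi_pos]⟩
  have hne : circleMap 0 1 (2 * α) ≠ 0 := circleMap_ne_center one_ne_zero
  have hsub : 1 - circleMap 1 1 (2 * α) = -circleMap 0 1 (2 * α) := by
    rw [← circleMap_sub_center 1, neg_sub]
  have hne1 : circleMap 1 1 (2 * α) ≠ 1 := circleMap_ne_center one_ne_zero
  have hmul : logSqDivOneSub (circleMap 1 1 (2 * α)) * (2 * (circleMap 0 1 (2 * α) * Complex.I)) =
      ((-2 : ℝ) : ℂ) * ((log (2 * cos α) + α * Complex.I) ^ 2 * Complex.I) := by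
    rw [of_ne hne1, hlog, hsub]
    field_simp
    simp
  rw [hmul, Complex.im_ofReal_mul, Complex.mul_I_im, sq, Complex.mul_re]
  simp only [Complex.add_re, Complex.add_im, Complex.ofReal_re, Complex.ofReal_im,
    Complex.re_ofReal_mul, Complex.im_ofReal_mul, Complex.I_re, Complex.I_im]
  ring

theorem norm_circleMap_zero_le {r φ : ℝ} (hr : 0 < r) (hr2 : r ≤ 1 / 2) (hφ : φ ∈ Ioc (-π) π) :
    ‖logSqDivOneSub (circleMap 0 r φ)‖ ≤ 2 * (|log r| + |φ|) ^ 2 := by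
  have hnorm : ‖circleMap 0 r φ‖ = r := by rw [norm_circleMap_zero, abs_of_pos hr]
  have hden : 1 / 2 ≤ ‖1 - circleMap 0 r φ‖ := by
    have := norm_sub_norm_le 1 (circleMap 0 r φ)
    rw [hnorm, norm_one] at this
    linarith
  have hlog : ‖Complex.log (circleMap 0 r φ)‖ ≤ |log r| + |φ| := by
    rw [log_circleMap_zero hr hφ]
    exact (norm_add_le _ _).trans_eq (by simp [Complex.norm_real])
  have hne : circleMap 0 r φ ≠ 1 := fun h ↦ by
    rw [h, norm_one] at hnorm
    linarith
  rw [of_ne hne, norm_div, norm_pow]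
  calc
    _ ≤ (|log r| + |φ|) ^ 2 / (1 / 2) := by gcongr
    _ = _ := by ring

section primitive

variable {F : ℂ → ℂ} (hF : ∀ w ∈ ball (2 : ℂ) 2, HasDerivAt F (logSqDivOneSub w) w)

include hF

theorem primitive_im_ofReal {x : ℝ} (hx : x ∈ Ioo 0 4) : (F x).im = (F 1).im := by
  have hderiv : ∀ t ∈ Ioo (0 : ℝ) 4, HasDerivAt (fun t : ℝ ↦ (F t).im) 0 t := fun t ht ↦ by
    have hmem : (t : ℂ) ∈ ball (2 : ℂ) 2 := by
      simpa [circleMap_zero] using (circleMap_zero_mem_ball_iff (φ := 0) ht.1 zero_le_two).2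
        (by rw [cos_zero]; linarith [ht.2])
    simpa [im_ofReal ht.1.le] using
      hasDerivAt_im_comp (hF t hmem) (Complex.ofRealCLM.hasDerivAt (x := t))
  simpa using isOpen_Ioo.is_const_of_deriv_eq_zero isPreconnected_Ioo
    (fun t ht ↦ (hderiv t ht).differentiableAt.differentiableWithinAt)
    (fun t ht ↦ (hderiv t ht).deriv) hx (y := 1) (by norm_num)

theorem primitive_im_unitCircle {φ : ℝ} (hφ : φ ∈ Icc 0 π) (hcos : 1 < 4 * cos φ) :
    (F (circleMap 0 1 φ)).im = (F 1).im + φ ^ 3 / 6 := by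
  have hderiv : ∀ t ∈ Icc 0 φ,
      HasDerivAt (fun t : ℝ ↦ (F (circleMap 0 1 t)).im - t ^ 3 / 6) 0 t := fun t ht ↦ by
    have hmem : circleMap 0 1 t ∈ ball (2 : ℂ) 2 :=
      (circleMap_zero_mem_ball_iff one_pos zero_le_two).2 <| by
        linarith [cos_le_cos_of_nonneg_of_le_pi ht.1 hφ.2 ht.2]
    have him := hasDerivAt_im_comp (hF _ hmem) (hasDerivAt_circleMap 0 1 t)
    rw [im_mul_deriv_unitCircle ⟨by linarith [ht.1, pi_pos], ht.2.trans hφ.2⟩] at him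
    convert! him.sub ((hasDerivAt_pow 3 t).div_const 6) using 1
    push_cast
    ring
  have hconst := constant_of_has_deriv_right_zero (HasDerivAt.continuousOn hderiv)
    (fun t ht ↦ (hderiv t (Ico_subset_Icc_self ht)).hasDerivWithinAt) φ (right_mem_Icc.2 hφ.1)
  simp only [circleMap_zero, Complex.ofReal_one, Complex.ofReal_zero, zero_mul, Complex.exp_zero,
    mul_one] at hconst ⊢
  linarith

theorem norm_primitive_circleMap_sub_le {r φ : ℝ} (hr : 0 < r) (hr2 : r ≤ 1 / 2)
    (hφ : φ ∈ Icc 0 (π / 2)) (hcos : r < 4 * cos φ) :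
    ‖F (circleMap 0 r φ) - F r‖ ≤ π * (r * (|log r| + π / 2) ^ 2) := by
  have hderiv : ∀ t ∈ Icc 0 φ, HasDerivWithinAt (fun t ↦ F (circleMap 0 r t))
      ((circleMap 0 r t * Complex.I) • logSqDivOneSub (circleMap 0 r t)) (Icc 0 φ) t := by
    intro t ht
    have hmem : circleMap 0 r t ∈ ball (2 : ℂ) 2 :=
      (circleMap_zero_mem_ball_iff hr zero_le_two).2 <| by
        linarith [cos_le_cos_of_nonneg_of_le_pi ht.1 (by linarith [hφ.2, pi_pos]) ht.2]
    exact ((hF _ hmem).scomp t (hasDerivAt_circleMap 0 r t)).hasDerivWithinAt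
  have hbound : ∀ t ∈ Ico 0 φ,
      ‖(circleMap 0 r t * Complex.I) • logSqDivOneSub (circleMap 0 r t)‖ ≤
        r * (2 * (|log r| + π / 2) ^ 2) := by
    intro t ht
    have htπ : |t| ≤ π / 2 := by rw [abs_of_nonneg ht.1]; linarith [ht.2, hφ.2]
    have hg := norm_circleMap_zero_le hr hr2
      (φ := t) ⟨by linarith [ht.1, pi_pos], by linarith [ht.2, hφ.2, pi_pos]⟩
    rw [norm_smul, norm_mul, norm_circleMap_zero, abs_of_pos hr, Complex.norm_I, mul_one]
    exact mul_le_mul_of_nonneg_left (hg.trans (by gcongr)) hr.le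
  have hmvt := norm_image_sub_le_of_norm_deriv_le_segment' hderiv hbound φ (right_mem_Icc.2 hφ.1)
  calc
    ‖F (circleMap 0 r φ) - F r‖ ≤ r * (2 * (|log r| + π / 2) ^ 2) * φ := by
      simpa [circleMap_zero] using hmvt
    _ ≤ r * (2 * (|log r| + π / 2) ^ 2) * (π / 2) := by gcongr; exact hφ.2
    _ = _ := by ring

theorem tendsto_primitive_im_circle_one_one :
    Tendsto (fun α : ℝ ↦ (F (circleMap 1 1 (2 * α))).im) (𝓝[<] (π / 2)) (𝓝 (F 1).im) := by
  have hpos : ∀ᶠ α in 𝓝[<] (π / 2), α ∈ Ioo 0 (π / 2) := Ioo_mem_nhdsLT (by positivity)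
  have hcos : Tendsto (fun α ↦ 2 * cos α) (𝓝[<] (π / 2)) (𝓝[>] 0) := by
    refine tendsto_nhdsWithin_iff.2 ⟨?_, ?_⟩
    · exact ((continuous_cos.const_mul 2).tendsto' _ _ (by simp)).mono_left nhdsWithin_le_nhds
    · filter_upwards [hpos] with α hα
      exact mul_pos two_pos (cos_pos_of_mem_Ioo ⟨by linarith [hα.1, pi_pos], hα.2⟩)
  have hbound := ((tendsto_mul_abs_log_add_sq_nhdsGT_zero (π / 2)).const_mul π).comp hcos
  rw [mul_zero] at hbound
  rw [tendsto_iff_norm_sub_tendsto_zero]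
  refine squeeze_zero' (Eventually.of_forall fun _ ↦ norm_nonneg _) ?_ hbound
  filter_upwards [hpos, hcos.eventually (Ioc_mem_nhdsGT (show (0 : ℝ) < 1 / 2 by norm_num))]
    with α hα hr
  rw [← primitive_im_ofReal hF ⟨hr.1, by linarith [hr.2]⟩, ← Complex.sub_im,
    circleMap_one_one_two_mul]
  exact (Complex.abs_im_le_norm _).trans
    (norm_primitive_circleMap_sub_le hF hr.1 hr.2 (Ioo_subset_Icc_self hα) (by linarith [hr.1]))

theorem hasDerivAt_primitive_im_circle_one_one {α : ℝ} (hα : α ∈ Ioo (-(π / 2)) (π / 2)) :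
    HasDerivAt (fun α : ℝ ↦ (F (circleMap 1 1 (2 * α))).im)
      (2 * (α ^ 2 - log (2 * cos α) ^ 2)) α := by
  have hcos : 0 < cos α := cos_pos_of_mem_Ioo hα
  have hmem : circleMap 1 1 (2 * α) ∈ ball (2 : ℂ) 2 := by
    rw [circleMap_one_one_two_mul]
    exact (circleMap_zero_mem_ball_iff (by positivity) zero_le_two).2 (by linarith)
  have hγ : HasDerivAt (fun α : ℝ ↦ circleMap 1 1 (2 * α))
      (2 * (circleMap 0 1 (2 * α) * Complex.I)) α := by
    simpa [Function.comp_def] using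
      (hasDerivAt_circleMap 1 1 (2 * α)).scomp α ((hasDerivAt_id α).const_mul 2)
  rw [← im_mul_deriv_circle_one_one hα]
  exact hasDerivAt_im_comp (hF _ hmem) hγ

theorem integral_log_two_mul_cos_sq {a : ℝ} (ha : a ∈ Ioo (-(π / 2)) (π / 2)) :
    ∫ α in a..π / 2, log (2 * cos α) ^ 2 =
      ((π / 2) ^ 3 - a ^ 3) / 3 + ((F (circleMap 1 1 (2 * a))).im - (F 1).im) / 2 := by
  let H : ℝ → ℝ := fun α ↦ α ^ 3 / 3 - (F (circleMap 1 1 (2 * α))).im / 2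
  have hH : ∀ α ∈ Ioo (-(π / 2)) (π / 2), HasDerivAt H (log (2 * cos α) ^ 2) α := fun α hα ↦ by
    convert! ((hasDerivAt_pow 3 α).div_const 3).sub
      ((hasDerivAt_primitive_im_circle_one_one hF hα).div_const 2) using 1
    norm_num
  have hleft : Tendsto H (𝓝[>] a) (𝓝 (H a)) := (hH a ha).continuousAt.continuousWithinAt
  have hright : Tendsto H (𝓝[<] (π / 2)) (𝓝 ((π / 2) ^ 3 / 3 - (F 1).im / 2)) :=
    ((((continuous_pow 3).div_const 3).tendsto (π / 2)).mono_left nhdsWithin_le_nhds).sub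
      ((tendsto_primitive_im_circle_one_one hF).div_const 2)
  rw [intervalIntegral_eq_sub_of_hasDerivAt_of_nonneg_of_tendsto ha.2
    (fun α hα ↦ hH α (Ioo_subset_Ioo_left ha.1.le hα)) (fun _ _ ↦ sq_nonneg _) hleft hright]
  ring

end primitive

end logSqDivOneSub

theorem integral_log_two_mul_sin_half_sq (σ : ℝ) :
    ∫ θ in (0 : ℝ)..σ, log (2 * sin (θ / 2)) ^ 2 =
      2 * ∫ α in (π - σ) / 2..π / 2, log (2 * cos α) ^ 2 := by
  have hsubst := intervalIntegral.integral_comp_sub_div (a := 0) (b := σ)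
    (fun α ↦ log (2 * cos α) ^ 2) two_ne_zero (π / 2)
  simpa only [cos_pi_div_two_sub, zero_div, sub_zero, smul_eq_mul, sub_div] using hsubst

theorem ls3_pi_over_3 :
    ∫ θ in (0:ℝ)..(π/3), (Real.log (2 * Real.sin (θ/2)))^2 = 7/108 * π^3 := by
  obtain ⟨F, hF⟩ := logSqDivOneSub.exists_primitive
  have hvertex : circleMap 1 1 (2 * (π / 3)) = circleMap 0 1 (π / 3) := by
    rw [circleMap_one_one_two_mul, cos_pi_div_three]
    norm_num
  have hcos : 1 < 4 * cos (π / 3) := by rw [cos_pi_div_three]; norm_num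
  have hlower : (π - π / 3) / 2 = π / 3 := by ring
  have hpi := pi_pos
  rw [integral_log_two_mul_sin_half_sq, hlower,
    logSqDivOneSub.integral_log_two_mul_cos_sq hF ⟨by linarith, by linarith⟩, hvertex,
    logSqDivOneSub.primitive_im_unitCircle hF ⟨by linarith, by linarith⟩ hcos]
  ring
end

section
/- $\sum_{k=0}^\infty \frac{2^{-4k}}{(2k+1)^2}\binom{2k}{k} = \mathrm{Cl}_2(\pi/3)$, where $\mathrm{Cl}_2(\theta) = \sum_{n=1}^\infty \sin(n\theta)/n^2$ is the Clausen function. -/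
open Real

/-!
Let `Li₂` be the dilogarithm, so that the Clausen sum at `θ` is the imaginary part of
`Li₂ (exp (iθ))`. The point `exp (iπ/3)` also lies on the circle `|1 - z| = 1`, where it is joined
to `0` by the arc `z = 1 - exp (-iθ)`, `0 ≤ θ ≤ π/3`. Along this arc `-log (1 - z) = iθ`, and
`Im Li₂` has the elementary derivative `(θ/2) cot (θ/2)`. This is also the derivative of
`2 ∫₀^{sin (θ/2)} arcsin u / u du`, which at `θ = π/3` is the central binomial series.
-/

theorem eqOn_Icc_of_hasDerivAt_eq {E : Type*} [NormedAddCommGroup E] [NormedSpace ℝ E]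
    [CompleteSpace E] {f g f' : ℝ → E} {a b : ℝ} (hf : ContinuousOn f (Set.Icc a b))
    (hg : ContinuousOn g (Set.Icc a b)) (hf' : ∀ x ∈ Set.Ioo a b, HasDerivAt f (f' x) x)
    (hg' : ∀ x ∈ Set.Ioo a b, HasDerivAt g (f' x) x) (ha : f a = g a) :
    Set.EqOn f g (Set.Icc a b) := by
  intro x hx
  have hsub : Set.Icc a x ⊆ Set.Icc a b := Set.Icc_subset_Icc_right hx.2
  have hzero (y : ℝ) (hy : y ∈ Set.Ioo a x) : HasDerivAt (f - g) 0 y := by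
    have hy' := Set.Ioo_subset_Ioo_right hx.2 hy
    simpa using (hf' y hy').sub (hg' y hy')
  have hint := intervalIntegral.integral_eq_sub_of_hasDerivAt_of_le hx.1
    ((hf.sub hg).mono hsub) hzero intervalIntegrable_const
  simpa [ha, sub_eq_zero, eq_comm] using hint

theorem hasDerivAt_tsum_mul_pow_succ_div {𝕜 : Type*} [RCLike 𝕜] {a : ℕ → 𝕜} {C : ℝ}
    (ha : ∀ n, ‖a n‖ ≤ C) {e : ℕ → ℕ} (he : ∀ n, n ≤ e n) {z : 𝕜} (hz : ‖z‖ < 1) :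
    HasDerivAt (fun w ↦ ∑' n, a n * w ^ (e n + 1) / (e n + 1)) (∑' n, a n * z ^ e n) z := by
  obtain ⟨r, hzr, hr⟩ := exists_between hz
  have hr0 : 0 ≤ r := (norm_nonneg z).trans hzr.le
  refine hasDerivAt_tsum_of_isPreconnected (u := fun n ↦ C * r ^ n) (y₀ := 0)
    (g := fun n w ↦ a n * w ^ (e n + 1) / (e n + 1)) (g' := fun n w ↦ a n * w ^ e n)
    ((summable_geometric_of_lt_one hr0 hr).mul_left C) Metric.isOpen_ball
    (convex_ball (0 : 𝕜) r).isPreconnected (fun n y _ ↦ ?_) (fun n y hy ↦ ?_)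
    (Metric.mem_ball_self ((norm_nonneg z).trans_lt hzr)) (by simp) (by simpa using hzr)
  · have hne : (e n : 𝕜) + 1 ≠ 0 := Nat.cast_add_one_ne_zero _
    simpa [mul_div_assoc, mul_div_cancel_left₀ _ hne] using
      ((hasDerivAt_pow (e n + 1) y).const_mul (a n)).div_const ((e n : 𝕜) + 1)
  · have hy' : ‖y‖ ≤ r := (mem_ball_zero_iff.mp hy).le
    have hC : 0 ≤ C := (norm_nonneg _).trans (ha n)
    calc ‖a n * y ^ e n‖ = ‖a n‖ * ‖y‖ ^ e n := by rw [norm_mul, norm_pow]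
      _ ≤ C * r ^ e n := by gcongr; exact ha n
      _ ≤ C * r ^ n := mul_le_mul_of_nonneg_left (pow_le_pow_of_le_one hr0 hr.le (he n)) hC

theorem continuousOn_tsum_mul_pow {𝕜 : Type*} [NormedField 𝕜] [CompleteSpace 𝕜] {c : ℕ → 𝕜}
    (hc : Summable fun n ↦ ‖c n‖) (e : ℕ → ℕ) :
    ContinuousOn (fun z ↦ ∑' n, c n * z ^ e n) {z | ‖z‖ ≤ 1} := by
  refine continuousOn_tsum (fun n ↦ by fun_prop) hc fun n z hz ↦ ?_
  rw [norm_mul, norm_pow]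
  exact mul_le_of_le_one_right (norm_nonneg _) (pow_le_one₀ (norm_nonneg z) hz)

theorem summable_one_div_nat_add_one_sq : Summable fun n : ℕ ↦ 1 / ((n : ℝ) + 1) ^ 2 := by
  simpa using (summable_nat_add_iff 1).mpr (summable_one_div_nat_pow.mpr one_lt_two)

section Dilogarithm

/-- The dilogarithm `Li₂`, given by its power series. This is the dilogarithm only on the closed
unit disc; elsewhere the series diverges and the value is junk. -/
noncomputable def dilog (z : ℂ) : ℂ := ∑' n : ℕ, z ^ (n + 1) / ((n : ℂ) + 1) ^ 2

/-- The Clausen function `Cl₂(θ) = ∑ sin (nθ) / n²`, with the index `n ≥ 1` shifted to start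
at `0`. -/
noncomputable def clausen (θ : ℝ) : ℝ := ∑' n : ℕ, sin ((n + 1) * θ) / (n + 1) ^ 2

theorem summable_norm_one_div_natCast_add_one_sq :
    Summable fun n : ℕ ↦ ‖1 / ((n : ℂ) + 1) ^ 2‖ := by
  refine summable_one_div_nat_add_one_sq.congr fun n ↦ ?_
  rw [norm_div, norm_one, norm_pow, ← Nat.cast_add_one, ← Nat.cast_add_one, Complex.norm_natCast]

theorem dilog_zero : dilog 0 = 0 := by simp [dilog]

theorem continuousOn_dilog : ContinuousOn dilog {z | ‖z‖ ≤ 1} :=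
  (continuousOn_tsum_mul_pow summable_norm_one_div_natCast_add_one_sq (· + 1)).congr
    fun _ _ ↦ tsum_congr fun _ ↦ (one_div_mul_eq_div _ _).symm

theorem hasDerivAt_dilog {z : ℂ} (hz : ‖z‖ < 1) (hz0 : z ≠ 0) :
    HasDerivAt dilog (-Complex.log (1 - z) / z) z := by
  have hbound (n : ℕ) : ‖1 / ((n : ℂ) + 1)‖ ≤ 1 := by
    rw [norm_div, norm_one, ← Nat.cast_add_one, Complex.norm_natCast]
    exact div_le_one_of_le₀ (by simp) (by positivity)
  have hlog : ∑' n : ℕ, 1 / ((n : ℂ) + 1) * z ^ n = -Complex.log (1 - z) / z := by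
    rw [eq_div_iff hz0, ← tsum_mul_right, ← (Complex.hasSum_taylorSeries_neg_log' hz).tsum_eq]
    exact tsum_congr fun n ↦ by ring
  rw [← hlog]
  convert! hasDerivAt_tsum_mul_pow_succ_div hbound (e := id) (fun _ ↦ le_rfl) hz using 2
  exact tsum_congr fun n ↦ by rw [sq, ← div_div, id]; ring

theorem dilog_exp_mul_I_im (θ : ℝ) : (dilog (Complex.exp (θ * Complex.I))).im = clausen θ := by
  have hpow (n : ℕ) : Complex.exp (θ * Complex.I) ^ (n + 1)
      = Complex.exp (((n + 1) * θ : ℝ) * Complex.I) := by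
    rw [← Complex.exp_nat_mul]
    push_cast
    ring_nf
  have hsum : Summable fun n : ℕ ↦
      Complex.exp (θ * Complex.I) ^ (n + 1) / ((n : ℂ) + 1) ^ 2 := by
    refine .of_norm (summable_norm_one_div_natCast_add_one_sq.congr fun n ↦ ?_)
    rw [norm_div, norm_div, norm_pow _ (n + 1), Complex.norm_exp_ofReal_mul_I, one_pow, norm_one]
  rw [dilog, clausen, Complex.im_tsum hsum]
  refine tsum_congr fun n ↦ ?_
  rw [hpow, ← Complex.exp_ofReal_mul_I_im, ← Complex.div_ofReal_im]
  push_cast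
  rfl

end Dilogarithm

section ArcsinIntegral

theorem succ_nsmul_multichoose_succ {R : Type*} [Semiring R] [BinomialRing R] (r : R) (n : ℕ) :
    (n + 1) • Ring.multichoose r (n + 1) = Ring.multichoose r n * (r + n) := by
  have := BinomialRing.toIsAddTorsionFree (R := R)
  refine nsmul_right_injective n.factorial_ne_zero ?_
  calc n.factorial • (n + 1) • Ring.multichoose r (n + 1)
    _ = (ascPochhammer ℕ (n + 1)).smeval r := by
      rw [smul_smul, mul_comm, ← Nat.factorial_succ,
        Ring.factorial_nsmul_multichoose_eq_ascPochhammer]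
    _ = (ascPochhammer ℕ n).smeval r * (r + n) := by
      simp [ascPochhammer_succ_right, Polynomial.smeval_mul, Polynomial.smeval_add,
        Polynomial.smeval_X, Polynomial.smeval_natCast]
    _ = n.factorial • (Ring.multichoose r n * (r + n)) := by
      rw [← Ring.factorial_nsmul_multichoose_eq_ascPochhammer, smul_mul_assoc]

theorem multichoose_one_half {K : Type*} [Field K] [BinomialRing K] (n : ℕ) :
    Ring.multichoose (1 / 2 : K) n = n.centralBinom / 4 ^ n := by
  have := BinomialRing.toIsAddTorsionFree (R := K)
  have : CharZero K := .of_isAddTorsionFree K K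
  induction n with
  | zero => simp
  | succ n ih =>
    have hcentral : ((n : K) + 1) * (n + 1).centralBinom = 2 * (2 * n + 1) * n.centralBinom :=
      mod_cast n.succ_mul_centralBinom_succ
    have hmulti := succ_nsmul_multichoose_succ (1 / 2 : K) n
    rw [nsmul_eq_mul, Nat.cast_add_one, ih] at hmulti
    apply mul_left_cancel₀ (n.cast_add_one_ne_zero : (n : K) + 1 ≠ 0)
    rw [hmulti, ← mul_div_assoc, hcentral]
    field

theorem hasSum_centralBinom_div_four_pow_mul_pow {x : ℝ} (hx : |x| < 1) :
    HasSum (fun n : ℕ ↦ n.centralBinom / 4 ^ n * x ^ n) (1 / √(1 - x)) := by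
  have h := (Real.one_div_one_sub_rpow_hasFPowerSeriesOnBall_zero (1 / 2)).hasSum (y := x)
    (by simpa [enorm_eq_nnnorm, ← NNReal.coe_lt_coe] using hx)
  simpa [-one_div, ← Ring.multichoose_eq, multichoose_one_half, sqrt_eq_rpow, mul_comm,
    FormalMultilinearSeries.ofScalars_apply_eq] using h

theorem norm_centralBinom_div_four_pow_le_one (n : ℕ) : ‖(n.centralBinom / 4 ^ n : ℝ)‖ ≤ 1 := by
  rw [norm_of_nonneg (by positivity)]
  exact div_le_one_of_le₀ (mod_cast n.centralBinom_le_four_pow) (by positivity)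

theorem arcsin_eq_tsum {x : ℝ} (hx : |x| < 1) :
    arcsin x = ∑' n : ℕ, n.centralBinom / 4 ^ n * x ^ (2 * n + 1) / (2 * n + 1) := by
  have harcsin (y : ℝ) (hy : y ∈ Metric.ball 0 1) : HasDerivAt arcsin (1 / √(1 - y ^ 2)) y := by
    rw [mem_ball_zero_iff, norm_eq_abs, abs_lt] at hy
    exact hasDerivAt_arcsin hy.1.ne' hy.2.ne
  have hseries (y : ℝ) (hy : y ∈ Metric.ball 0 1) : HasDerivAt
      (fun y ↦ ∑' n : ℕ, (n.centralBinom / 4 ^ n : ℝ) * y ^ (2 * n + 1) / (2 * n + 1))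
      (1 / √(1 - y ^ 2)) y := by
    rw [mem_ball_zero_iff] at hy
    have hsq : |y ^ 2| < 1 := by rwa [abs_pow, sq_lt_one_iff₀ (abs_nonneg y)]
    rw [← (hasSum_centralBinom_div_four_pow_mul_pow hsq).tsum_eq]
    simpa [pow_mul] using hasDerivAt_tsum_mul_pow_succ_div norm_centralBinom_div_four_pow_le_one
      (e := (2 * ·)) (fun n ↦ by lia) hy
  refine Metric.isOpen_ball.eqOn_of_deriv_eq (convex_ball (0 : ℝ) 1).isPreconnected
    (fun y hy ↦ (harcsin y hy).differentiableAt.differentiableWithinAt)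
    (fun y hy ↦ (hseries y hy).differentiableAt.differentiableWithinAt)
    (fun y hy ↦ (harcsin y hy).deriv.trans (hseries y hy).deriv.symm)
    (Metric.mem_ball_self one_pos) (by simp) (by simpa using hx)

/-- The integral `∫₀ˣ arcsin u / u du`, given by its power series. It is this integral only for
`|x| ≤ 1`; elsewhere the series diverges and the value is junk. -/
noncomputable def arcsinIntegral (x : ℝ) : ℝ :=
  ∑' n : ℕ, n.centralBinom / 4 ^ n * x ^ (2 * n + 1) / (2 * n + 1) ^ 2

theorem arcsinIntegral_zero : arcsinIntegral 0 = 0 := by simp [arcsinIntegral]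

theorem continuousOn_arcsinIntegral : ContinuousOn arcsinIntegral {x | ‖x‖ ≤ 1} := by
  have hsum : Summable fun n : ℕ ↦ ‖(n.centralBinom / 4 ^ n / (2 * n + 1) ^ 2 : ℝ)‖ := by
    refine summable_one_div_nat_add_one_sq.of_nonneg_of_le (fun _ ↦ norm_nonneg _) fun n ↦ ?_
    rw [norm_div, norm_of_nonneg (by positivity : (0 : ℝ) ≤ (2 * n + 1) ^ 2)]
    gcongr
    · exact norm_centralBinom_div_four_pow_le_one n
    · linarith [n.cast_nonneg (α := ℝ)]
  exact (continuousOn_tsum_mul_pow hsum (2 * · + 1)).congr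
    fun _ _ ↦ tsum_congr fun _ ↦ (div_mul_eq_mul_div _ _ _).symm

theorem hasDerivAt_arcsinIntegral {x : ℝ} (hx : |x| < 1) (hx0 : x ≠ 0) :
    HasDerivAt arcsinIntegral (arcsin x / x) x := by
  have hbound (n : ℕ) : ‖(n.centralBinom / 4 ^ n / (2 * n + 1) : ℝ)‖ ≤ 1 := by
    rw [norm_div, norm_of_nonneg (by positivity : (0 : ℝ) ≤ 2 * n + 1)]
    refine div_le_one_of_le₀ ((norm_centralBinom_div_four_pow_le_one n).trans ?_) (by positivity)
    linarith [n.cast_nonneg (α := ℝ)]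
  have harcsin : ∑' n : ℕ, (n.centralBinom / 4 ^ n / (2 * n + 1) : ℝ) * x ^ (2 * n)
      = arcsin x / x := by
    rw [eq_div_iff hx0, ← tsum_mul_right, arcsin_eq_tsum hx]
    exact tsum_congr fun n ↦ by ring
  rw [← harcsin]
  convert! hasDerivAt_tsum_mul_pow_succ_div hbound (e := (2 * ·)) (fun n ↦ by lia) hx using 2
  exact tsum_congr fun n ↦ by rw [sq, ← div_div]; push_cast; ring

theorem two_mul_arcsinIntegral_one_half :
    2 * arcsinIntegral (1 / 2)
      = ∑' k : ℕ, (2 : ℝ) ^ (-(4 : ℤ) * k) / (2 * k + 1) ^ 2 * k.centralBinom := by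
  rw [arcsinIntegral, ← tsum_mul_left]
  refine tsum_congr fun k ↦ ?_
  have h16 : (2 : ℝ) ^ (-(4 : ℤ) * k) = 2 * (1 / 2) ^ (2 * k + 1) / 4 ^ k := by
    rw [zpow_mul, zpow_natCast, pow_succ, pow_mul, mul_left_comm, mul_one_div_cancel two_ne_zero,
      mul_one, ← div_pow]
    norm_num
  rw [h16]
  ring

end ArcsinIntegral

section Arc

theorem norm_one_sub_exp_neg_mul_I (θ : ℝ) :
    ‖1 - Complex.exp (-(θ * Complex.I))‖ = 2 * |sin (θ / 2)| := by
  have h := Complex.norm_exp_I_mul_ofReal_sub_one (-θ)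
  rwa [norm_sub_rev, Complex.ofReal_neg, mul_neg, mul_comm, neg_div, sin_neg, norm_eq_abs,
    abs_mul, abs_neg, abs_two] at h

theorem inv_exp_mul_I_sub_one_im (θ : ℝ) :
    (Complex.exp (θ * Complex.I) - 1)⁻¹.im = -cot (θ / 2) / 2 := by
  have hnorm : Complex.normSq (Complex.exp (θ * Complex.I) - 1) = 4 * sin (θ / 2) ^ 2 := by
    rw [Complex.normSq_eq_norm_sq, mul_comm, Complex.norm_exp_I_mul_ofReal_sub_one, norm_eq_abs,
      sq_abs]
    ring
  have hsin : sin θ = 2 * sin (θ / 2) * cos (θ / 2) := by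
    rw [← sin_two_mul, mul_div_cancel₀ _ two_ne_zero]
  rw [Complex.inv_im, hnorm, Complex.sub_im, Complex.exp_ofReal_mul_I_im, Complex.one_im, sub_zero,
    hsin, cot_eq_cos_div_sin]
  field

theorem one_sub_exp_neg_pi_div_three_mul_I :
    1 - Complex.exp (-((π / 3 : ℝ) * Complex.I)) = Complex.exp ((π / 3 : ℝ) * Complex.I) := by
  apply Complex.ext
  · rw [← neg_mul, ← Complex.ofReal_neg, Complex.sub_re, Complex.exp_ofReal_mul_I_re,
      Complex.exp_ofReal_mul_I_re, cos_neg, cos_pi_div_three, Complex.one_re]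
    norm_num
  · rw [← neg_mul, ← Complex.ofReal_neg, Complex.sub_im, Complex.exp_ofReal_mul_I_im,
      Complex.exp_ofReal_mul_I_im, sin_neg, Complex.one_im, zero_sub, neg_neg]

theorem strictMonoOn_norm_one_sub_exp_neg_mul_I :
    StrictMonoOn (fun θ : ℝ ↦ ‖1 - Complex.exp (-(θ * Complex.I))‖) (Set.Icc 0 π) := by
  intro θ hθ φ hφ hlt
  have hsin_nonneg : 0 ≤ sin (θ / 2) :=
    sin_nonneg_of_nonneg_of_le_pi (by linarith [hθ.1]) (by linarith [hθ.1, hθ.2])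
  have hsin_lt : sin (θ / 2) < sin (φ / 2) :=
    sin_lt_sin_of_lt_of_le_pi_div_two (by linarith [hθ.1, hφ.2]) (by linarith [hφ.2])
      (by linarith)
  simp only [norm_one_sub_exp_neg_mul_I]
  rw [abs_of_nonneg hsin_nonneg, abs_of_pos (hsin_nonneg.trans_lt hsin_lt)]
  linarith

theorem norm_one_sub_exp_neg_mul_I_le_one {θ : ℝ} (h0 : 0 ≤ θ) (h : θ ≤ π / 3) :
    ‖1 - Complex.exp (-(θ * Complex.I))‖ ≤ 1 := by
  rw [← Complex.norm_exp_ofReal_mul_I (π / 3), ← one_sub_exp_neg_pi_div_three_mul_I]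
  exact strictMonoOn_norm_one_sub_exp_neg_mul_I.monotoneOn ⟨h0, by linarith [pi_pos]⟩
    ⟨by positivity, by linarith [pi_pos]⟩ h

theorem norm_one_sub_exp_neg_mul_I_lt_one {θ : ℝ} (h0 : 0 ≤ θ) (h : θ < π / 3) :
    ‖1 - Complex.exp (-(θ * Complex.I))‖ < 1 := by
  rw [← Complex.norm_exp_ofReal_mul_I (π / 3), ← one_sub_exp_neg_pi_div_three_mul_I]
  exact strictMonoOn_norm_one_sub_exp_neg_mul_I ⟨h0, by linarith [pi_pos]⟩
    ⟨by positivity, by linarith [pi_pos]⟩ h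

theorem hasDerivAt_dilog_one_sub_exp_im {θ : ℝ} (h0 : 0 < θ) (h : θ < π / 3) :
    HasDerivAt (fun θ : ℝ ↦ (dilog (1 - Complex.exp (-(θ * Complex.I)))).im)
      (θ * cot (θ / 2) / 2) θ := by
  have hlog : Complex.log (Complex.exp (-(θ * Complex.I))) = -(θ * Complex.I) :=
    Complex.log_exp (by simp; linarith) (by simp; linarith)
  have hne : 1 - Complex.exp (-(θ * Complex.I)) ≠ 0 := by
    intro heq
    rw [← sub_eq_zero.mp heq, Complex.log_one] at hlog
    simp [h0.ne'] at hlog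
  have harc : HasDerivAt (fun θ : ℝ ↦ 1 - Complex.exp (-(θ * Complex.I)))
      (Complex.I * Complex.exp (-(θ * Complex.I))) θ := by
    simpa [mul_comm] using!
      ((((hasDerivAt_id (θ : ℂ)).mul_const Complex.I).neg).cexp.const_sub 1).comp_ofReal
  have hvalue : -Complex.log (1 - (1 - Complex.exp (-(θ * Complex.I))))
        / (1 - Complex.exp (-(θ * Complex.I))) * (Complex.I * Complex.exp (-(θ * Complex.I)))
      = ((-θ : ℝ) : ℂ) * (Complex.exp (θ * Complex.I) - 1)⁻¹ := by
    have hinv : Complex.exp (-(θ * Complex.I)) / (1 - Complex.exp (-(θ * Complex.I)))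
        = (Complex.exp (θ * Complex.I) - 1)⁻¹ := by
      rw [← inv_div, sub_div, div_self (Complex.exp_ne_zero _), Complex.exp_neg, one_div, inv_inv]
    rw [sub_sub_cancel, hlog, ← hinv, Complex.ofReal_neg]
    linear_combination (θ * (Complex.exp (-(θ * Complex.I))
      / (1 - Complex.exp (-(θ * Complex.I))))) * Complex.I_sq
  have hderiv := (hasDerivAt_dilog (norm_one_sub_exp_neg_mul_I_lt_one h0.le h) hne).comp θ harc
  rw [hvalue] at hderiv
  have him := Complex.imCLM.hasFDerivAt.comp_hasDerivAt θ hderiv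
  rw [Complex.imCLM_apply, Complex.im_ofReal_mul, inv_exp_mul_I_sub_one_im] at him
  convert! him using 1
  ring

theorem hasDerivAt_two_mul_arcsinIntegral_sin {θ : ℝ} (h0 : 0 < θ) (h : θ < π) :
    HasDerivAt (fun θ ↦ 2 * arcsinIntegral (sin (θ / 2))) (θ * cot (θ / 2) / 2) θ := by
  have hsin_pos : 0 < sin (θ / 2) := sin_pos_of_pos_of_lt_pi (by linarith) (by linarith)
  have hsin_lt : sin (θ / 2) < 1 := by
    rw [← sin_pi_div_two]
    exact sin_lt_sin_of_lt_of_le_pi_div_two (by linarith) le_rfl (by linarith)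
  have hsin : HasDerivAt (fun θ ↦ sin (θ / 2)) (cos (θ / 2) * (1 / 2)) θ :=
    ((hasDerivAt_id θ).div_const 2).sin
  have hderiv := ((hasDerivAt_arcsinIntegral (abs_lt.mpr ⟨by linarith, hsin_lt⟩)
    hsin_pos.ne').comp θ hsin).const_mul 2
  rw [arcsin_sin (by linarith) (by linarith)] at hderiv
  convert! hderiv using 1
  rw [cot_eq_cos_div_sin]
  ring

theorem dilog_one_sub_exp_im {θ : ℝ} (hθ : θ ∈ Set.Icc 0 (π / 3)) :
    (dilog (1 - Complex.exp (-(θ * Complex.I)))).im = 2 * arcsinIntegral (sin (θ / 2)) := by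
  have hdilog : ContinuousOn (fun θ : ℝ ↦ (dilog (1 - Complex.exp (-(θ * Complex.I)))).im)
      (Set.Icc 0 (π / 3)) :=
    Complex.continuous_im.comp_continuousOn <| continuousOn_dilog.comp (by fun_prop)
      fun θ hθ ↦ norm_one_sub_exp_neg_mul_I_le_one hθ.1 hθ.2
  have harcsin : ContinuousOn (fun θ ↦ 2 * arcsinIntegral (sin (θ / 2))) (Set.Icc 0 (π / 3)) :=
    (continuousOn_arcsinIntegral.comp (by fun_prop) fun θ _ ↦ abs_sin_le_one _).const_mul 2
  exact eqOn_Icc_of_hasDerivAt_eq hdilog harcsin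
    (fun θ hθ ↦ hasDerivAt_dilog_one_sub_exp_im hθ.1 hθ.2)
    (fun θ hθ ↦ hasDerivAt_two_mul_arcsinIntegral_sin hθ.1 (by linarith [hθ.2, pi_pos]))
    (by simp [dilog_zero, arcsinIntegral_zero]) hθ

end Arc

theorem central_binomial_sum_clausen :
    ∑' k : ℕ, (2:ℝ)^(-(4:ℤ)*k) / (2*k+1)^2 * (Nat.centralBinom k)
      = ∑' n : ℕ, Real.sin ((n+1) * (π/3)) / (n+1)^2 := by
  symm
  calc clausen (π / 3)
    _ = (dilog (Complex.exp ((π / 3 : ℝ) * Complex.I))).im := (dilog_exp_mul_I_im _).symm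
    _ = (dilog (1 - Complex.exp (-((π / 3 : ℝ) * Complex.I)))).im := by
      rw [one_sub_exp_neg_pi_div_three_mul_I]
    _ = 2 * arcsinIntegral (sin (π / 3 / 2)) :=
      dilog_one_sub_exp_im ⟨by positivity, le_rfl⟩
    _ = 2 * arcsinIntegral (1 / 2) := by
      rw [div_div, show (3 * 2 : ℝ) = 6 by norm_num, sin_pi_div_six]
    _ = _ := two_mul_arcsinIntegral_one_half
end

section
/- $\int_{1/6}^{5/6}\log^2(2\sin(\pi t))\,dt = \frac{\pi^2}{54}$. -/
open Real

/-!
Put `t = 1 / 2 + θ / π`, so that `2 sin (π t) = 2 cos θ` with `|θ| ≤ π / 3`. On the arc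
`w = 1 + exp (2 i θ)` one has `log w = log (2 cos θ) + i θ`, hence
`log w ^ 2 / (w - 1) dw = 2 i (log (2 cos θ) + i θ) ^ 2 dθ`. As `w = 2 cos θ exp (i θ)` and
`2 cos (π / 3) = 1`, this arc has the same endpoints as the arc `w = exp (i θ)`, `|θ| ≤ π / 3`. By
Cauchy's theorem in the half-plane `0 < re w` the contour can be moved to the latter, where
`log w = i θ` and the imaginary part of the integrand is elementary.
-/

open Complex (I)
open Set Topology

section Contour

variable {E : Type*} [NormedAddCommGroup E] [NormedSpace ℂ E]
  {f : ℂ → E} {s : Set ℂ} {γ γ' γ₁ γ₁' γ₂ γ₂' : ℝ → ℂ} {a b : ℝ}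

theorem intervalIntegrable_smul_comp {g : ℝ → ℂ} (hf : ContinuousOn f s)
    (hg : ContinuousOn g (uIcc a b)) (hγ : ContinuousOn γ (uIcc a b))
    (hγs : MapsTo γ (uIcc a b) s) :
    IntervalIntegrable (fun t ↦ g t • f (γ t)) MeasureTheory.volume a b :=
  (hg.smul (hf.comp hγ hγs)).intervalIntegrable

variable [CompleteSpace E]

theorem integral_deriv_smul_comp_eq_sub {F : ℂ → E} (hF : ∀ z ∈ s, HasDerivAt F (f z) z)
    (hf : ContinuousOn f s) (hγ : ∀ t ∈ uIcc a b, HasDerivAt γ (γ' t) t)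
    (hγ' : ContinuousOn γ' (uIcc a b)) (hγs : MapsTo γ (uIcc a b) s) :
    ∫ t in a..b, γ' t • f (γ t) = F (γ b) - F (γ a) :=
  intervalIntegral.integral_eq_sub_of_hasDerivAt
    (fun t ht ↦ (hF (γ t) (hγs ht)).scomp t (hγ t ht))
    (intervalIntegrable_smul_comp hf hγ' (HasDerivAt.continuousOn hγ) hγs)

theorem integral_deriv_smul_comp_eq_of_convex (hs : IsOpen s) (hconv : Convex ℝ s)
    (hf : DifferentiableOn ℂ f s)
    (hγ₁ : ∀ t ∈ uIcc a b, HasDerivAt γ₁ (γ₁' t) t) (hγ₁' : ContinuousOn γ₁' (uIcc a b))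
    (hγ₁s : MapsTo γ₁ (uIcc a b) s)
    (hγ₂ : ∀ t ∈ uIcc a b, HasDerivAt γ₂ (γ₂' t) t) (hγ₂' : ContinuousOn γ₂' (uIcc a b))
    (hγ₂s : MapsTo γ₂ (uIcc a b) s) (ha : γ₁ a = γ₂ a) (hb : γ₁ b = γ₂ b) :
    ∫ t in a..b, γ₁' t • f (γ₁ t) = ∫ t in a..b, γ₂' t • f (γ₂ t) := by
  obtain ⟨F, hF⟩ := hconv.exists_forall_hasDerivWithinAt hf
  replace hF : ∀ z ∈ s, HasDerivAt F (f z) z := fun z hz ↦ (hF z hz).hasDerivAt (hs.mem_nhds hz)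
  rw [integral_deriv_smul_comp_eq_sub hF hf.continuousOn hγ₁ hγ₁' hγ₁s,
    integral_deriv_smul_comp_eq_sub hF hf.continuousOn hγ₂ hγ₂' hγ₂s, ha, hb]

end Contour

/-- At `z = c` the junk value `f c ^ 2 / 0 = 0` is the limit. -/
theorem differentiableOn_sq_div_sub {f : ℂ → ℂ} {s : Set ℂ} {c : ℂ} (hs : s ∈ 𝓝 c)
    (hf : DifferentiableOn ℂ f s) (hc : f c = 0) :
    DifferentiableOn ℂ (fun z ↦ f z ^ 2 / (z - c)) s := by
  refine (hf.mul ((Complex.differentiableOn_dslope hs).2 hf)).congr fun z _ ↦ ?_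
  rcases eq_or_ne z c with rfl | hz
  · simp [hc]
  · rw [Pi.mul_apply, dslope_of_ne f hz, slope_def_field, hc, sub_zero, sq, mul_div_assoc]

theorem re_div_sub_one_of_norm_eq_one {z : ℂ} (hz : ‖z‖ = 1) (hz1 : z ≠ 1) :
    (z / (z - 1)).re = 1 / 2 := by
  have hz0 : z ≠ 0 := norm_ne_zero_iff.1 (by simp [hz])
  have hsub : z - 1 ≠ 0 := sub_ne_zero.2 hz1
  have hconj : (starRingEnd ℂ) (z / (z - 1)) = -1 / (z - 1) := by
    have hsub' : 1 - z ≠ 0 := sub_ne_zero.2 hz1.symm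
    rw [map_div₀, map_sub, map_one, ← Complex.inv_eq_conj hz]
    field_simp
    ring
  have hsum : z / (z - 1) + (starRingEnd ℂ) (z / (z - 1)) = 1 := by
    rw [hconj]
    field_simp
    ring
  have hre := congrArg Complex.re hsum
  rw [Complex.add_re, Complex.conj_re, Complex.one_re] at hre
  linarith

theorem one_add_exp_two_mul_I (x : ℂ) :
    1 + Complex.exp (2 * x * I) = 2 * Complex.cos x * Complex.exp (x * I) := by
  rw [Complex.two_cos, add_mul, neg_mul, ← Complex.exp_add, ← Complex.exp_add, neg_add_cancel,
    Complex.exp_zero, ← two_mul, ← mul_assoc, add_comm]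

theorem log_one_add_exp_two_mul_I {θ : ℝ} (hθ : θ ∈ Ioo (-(π / 2)) (π / 2)) :
    Complex.log (1 + Complex.exp (2 * θ * I)) = Real.log (2 * Real.cos θ) + θ * I := by
  have hcos : 0 < 2 * Real.cos θ := mul_pos two_pos (Real.cos_pos_of_mem_Ioo hθ)
  have hpolar : 1 + Complex.exp (2 * θ * I) = (2 * Real.cos θ : ℝ) * Complex.exp (θ * I) := by
    rw [one_add_exp_two_mul_I]
    push_cast
    rfl
  have him : ((θ : ℂ) * I).im = θ := by simp
  rw [hpolar, Complex.log_ofReal_mul hcos (Complex.exp_ne_zero _), Complex.log_exp] <;>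
    linarith [hθ.1, hθ.2, Real.pi_pos]

theorem re_one_add_exp_two_mul_I_pos {θ : ℝ} (hθ : θ ∈ Ioo (-(π / 2)) (π / 2)) :
    0 < (1 + Complex.exp (2 * θ * I)).re := by
  have harg : (2 * θ * I : ℂ) = ((2 * θ : ℝ) : ℂ) * I := by push_cast; rfl
  rw [harg, Complex.add_re, Complex.one_re, Complex.exp_ofReal_mul_I_re, Real.cos_two_mul]
  linarith [pow_pos (Real.cos_pos_of_mem_Ioo hθ) 2]

theorem re_exp_mul_I_pos {θ : ℝ} (hθ : θ ∈ Ioo (-(π / 2)) (π / 2)) :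
    0 < (Complex.exp (θ * I)).re := by
  rw [Complex.exp_ofReal_mul_I_re]
  exact Real.cos_pos_of_mem_Ioo hθ

theorem exp_mul_I_mem_slitPlane {θ : ℝ} (hθ : θ ∈ Ioo (-π) π) :
    Complex.exp (θ * I) ∈ Complex.slitPlane := by
  rw [Complex.mem_slitPlane_iff_arg, Complex.arg_exp_mul_I,
    (toIocMod_eq_self _).2 ⟨hθ.1, by linarith [hθ.2]⟩]
  exact ⟨hθ.2.ne, Complex.exp_ne_zero _⟩

theorem hasDerivAt_exp_mul_I (θ : ℝ) :
    HasDerivAt (fun θ : ℝ ↦ Complex.exp (θ * I)) (Complex.exp (θ * I) * I) θ := by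
  simpa using ((hasDerivAt_id (θ : ℂ)).mul_const I).cexp.comp_ofReal

theorem hasDerivAt_one_add_exp_two_mul_I (θ : ℝ) :
    HasDerivAt (fun θ : ℝ ↦ 1 + Complex.exp (2 * θ * I))
      (Complex.exp (2 * θ * I) * (2 * I)) θ := by
  simpa using
    ((((hasDerivAt_id (θ : ℂ)).const_mul 2).mul_const I).cexp.const_add 1).comp_ofReal

/-- The integrand `log w ^ 2 / (w - 1)` of the contour integral. Its value `0` at `w = 1`, due to
the convention `x / 0 = 0`, is the one that makes it holomorphic there. -/
noncomputable def logSqDivSubOne (w : ℂ) : ℂ := Complex.log w ^ 2 / (w - 1)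

theorem differentiableOn_logSqDivSubOne : DifferentiableOn ℂ logSqDivSubOne Complex.slitPlane :=
  differentiableOn_sq_div_sub (Complex.isOpen_slitPlane.mem_nhds Complex.one_mem_slitPlane)
    (fun _ hw ↦ (Complex.differentiableAt_log hw).differentiableWithinAt) Complex.log_one

theorem im_deriv_smul_logSqDivSubOne_one_add_exp {θ : ℝ} (hθ : θ ∈ Ioo (-(π / 2)) (π / 2)) :
    ((Complex.exp (2 * θ * I) * (2 * I)) • logSqDivSubOne (1 + Complex.exp (2 * θ * I))).im =
      2 * (Real.log (2 * Real.cos θ) ^ 2 - θ ^ 2) := by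
  have hne := Complex.exp_ne_zero (2 * θ * I)
  have hcancel : (Complex.exp (2 * θ * I) * (2 * I)) •
      logSqDivSubOne (1 + Complex.exp (2 * θ * I)) =
        2 * I * (Real.log (2 * Real.cos θ) + θ * I) ^ 2 := by
    rw [logSqDivSubOne, log_one_add_exp_two_mul_I hθ, add_sub_cancel_left, smul_eq_mul]
    field_simp
  rw [hcancel]
  simp [sq]

theorem im_deriv_smul_logSqDivSubOne_exp {θ : ℝ} (hθ : θ ∈ Ioo (-π) π) :
    ((Complex.exp (θ * I) * I) • logSqDivSubOne (Complex.exp (θ * I))).im = -θ ^ 2 / 2 := by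
  set z := Complex.exp (θ * I) with hz
  have hlog : Complex.log z = θ * I := by
    rw [hz, Complex.log_exp] <;> simp [hθ.1, hθ.2.le]
  have hfactor : (z * I) • logSqDivSubOne z = ((-θ ^ 2 : ℝ) : ℂ) * (z / (z - 1) * I) := by
    rw [logSqDivSubOne, hlog, mul_pow, Complex.I_sq, smul_eq_mul]
    push_cast
    ring
  rw [hfactor, Complex.im_ofReal_mul, Complex.mul_I_im]
  rcases eq_or_ne θ 0 with rfl | hθ0
  · simp
  have hz1 : z ≠ 1 := by
    intro h
    rw [h, Complex.log_one] at hlog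
    exact mul_ne_zero (Complex.ofReal_ne_zero.2 hθ0) Complex.I_ne_zero hlog.symm
  rw [re_div_sub_one_of_norm_eq_one (Complex.norm_exp_ofReal_mul_I θ) hz1]
  ring

section Arcs

variable {a b : ℝ}

theorem im_integral_logSqDivSubOne_one_add_exp (h : uIcc a b ⊆ Ioo (-(π / 2)) (π / 2)) :
    (∫ θ in a..b, (Complex.exp (2 * θ * I) * (2 * I)) •
        logSqDivSubOne (1 + Complex.exp (2 * θ * I))).im =
      ∫ θ in a..b, 2 * (Real.log (2 * Real.cos θ) ^ 2 - θ ^ 2) := by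
  have hint : IntervalIntegrable (fun θ : ℝ ↦ (Complex.exp (2 * θ * I) * (2 * I)) •
      logSqDivSubOne (1 + Complex.exp (2 * θ * I))) MeasureTheory.volume a b :=
    intervalIntegrable_smul_comp differentiableOn_logSqDivSubOne.continuousOn (by fun_prop)
      (by fun_prop) fun θ hθ ↦ Or.inl (re_one_add_exp_two_mul_I_pos (h hθ))
  exact (Complex.imCLM.intervalIntegral_comp_comm hint).symm.trans <|
    intervalIntegral.integral_congr fun θ hθ ↦ im_deriv_smul_logSqDivSubOne_one_add_exp (h hθ)

theorem im_integral_logSqDivSubOne_exp (h : uIcc a b ⊆ Ioo (-π) π) :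
    (∫ θ in a..b, (Complex.exp (θ * I) * I) • logSqDivSubOne (Complex.exp (θ * I))).im =
      ∫ θ in a..b, -θ ^ 2 / 2 := by
  have hint : IntervalIntegrable (fun θ : ℝ ↦ (Complex.exp (θ * I) * I) •
      logSqDivSubOne (Complex.exp (θ * I))) MeasureTheory.volume a b :=
    intervalIntegrable_smul_comp differentiableOn_logSqDivSubOne.continuousOn (by fun_prop)
      (by fun_prop) fun θ hθ ↦ exp_mul_I_mem_slitPlane (h hθ)
  exact (Complex.imCLM.intervalIntegral_comp_comm hint).symm.trans <|
    intervalIntegral.integral_congr fun θ hθ ↦ im_deriv_smul_logSqDivSubOne_exp (h hθ)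

end Arcs

theorem one_add_exp_two_mul_I_of_cos_eq_half {θ : ℝ} (hθ : Real.cos θ = 1 / 2) :
    1 + Complex.exp (2 * θ * I) = Complex.exp (θ * I) := by
  rw [one_add_exp_two_mul_I, ← Complex.ofReal_cos, hθ]
  norm_num

theorem uIcc_neg_pi_div_three_subset_Ioo : uIcc (-(π / 3)) (π / 3) ⊆ Ioo (-(π / 2)) (π / 2) := by
  have hπ := Real.pi_pos
  rw [uIcc_of_le (by linarith)]
  exact Icc_subset_Ioo (by linarith) (by linarith)

theorem integral_logSqDivSubOne_one_add_exp_eq :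
    ∫ θ in -(π / 3)..π / 3, (Complex.exp (2 * θ * I) * (2 * I)) •
        logSqDivSubOne (1 + Complex.exp (2 * θ * I)) =
      ∫ θ in -(π / 3)..π / 3, (Complex.exp (θ * I) * I) •
        logSqDivSubOne (Complex.exp (θ * I)) :=
  integral_deriv_smul_comp_eq_of_convex
    (isOpen_lt continuous_const Complex.continuous_re) (convex_halfSpace_re_gt 0)
    (differentiableOn_logSqDivSubOne.mono fun _ hw ↦ Or.inl hw)
    (fun θ _ ↦ hasDerivAt_one_add_exp_two_mul_I θ) (Continuous.continuousOn (by fun_prop))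
    (fun _ hθ ↦ re_one_add_exp_two_mul_I_pos (uIcc_neg_pi_div_three_subset_Ioo hθ))
    (fun θ _ ↦ hasDerivAt_exp_mul_I θ) (Continuous.continuousOn (by fun_prop))
    (fun _ hθ ↦ re_exp_mul_I_pos (uIcc_neg_pi_div_three_subset_Ioo hθ))
    (one_add_exp_two_mul_I_of_cos_eq_half (by rw [Real.cos_neg, Real.cos_pi_div_three]))
    (one_add_exp_two_mul_I_of_cos_eq_half Real.cos_pi_div_three)

theorem integral_log_two_mul_cos_sq_sub_sq :
    ∫ θ in -(π / 3)..π / 3, 2 * (Real.log (2 * Real.cos θ) ^ 2 - θ ^ 2) =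
      ∫ θ in -(π / 3)..π / 3, -θ ^ 2 / 2 := by
  have hsub : Ioo (-(π / 2)) (π / 2) ⊆ Ioo (-π) π :=
    Ioo_subset_Ioo (by linarith [Real.pi_pos]) (by linarith [Real.pi_pos])
  rw [← im_integral_logSqDivSubOne_one_add_exp uIcc_neg_pi_div_three_subset_Ioo,
    integral_logSqDivSubOne_one_add_exp_eq,
    im_integral_logSqDivSubOne_exp (uIcc_neg_pi_div_three_subset_Ioo.trans hsub)]

theorem continuousOn_log_two_mul_cos :
    ContinuousOn (fun θ ↦ Real.log (2 * Real.cos θ)) (Ioo (-(π / 2)) (π / 2)) :=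
  ContinuousOn.log (by fun_prop) fun _ hθ ↦
    (mul_pos two_pos (Real.cos_pos_of_mem_Ioo hθ)).ne'

theorem integral_log_two_mul_cos_sq :
    ∫ θ in -(π / 3)..π / 3, Real.log (2 * Real.cos θ) ^ 2 = π ^ 3 / 54 := by
  have hint : IntervalIntegrable (fun θ ↦ Real.log (2 * Real.cos θ) ^ 2) MeasureTheory.volume
      (-(π / 3)) (π / 3) :=
    ((continuousOn_log_two_mul_cos.mono uIcc_neg_pi_div_three_subset_Ioo).pow 2).intervalIntegrable
  have hsq : ∫ θ in -(π / 3)..π / 3, θ ^ 2 = 2 * π ^ 3 / 81 := by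
    rw [integral_pow]
    ring
  have h := integral_log_two_mul_cos_sq_sub_sq
  rw [intervalIntegral.integral_const_mul,
    intervalIntegral.integral_sub hint (Continuous.intervalIntegrable (by fun_prop) _ _),
    intervalIntegral.integral_div, intervalIntegral.integral_neg, hsq] at h
  linarith

theorem mu2_1xy_star :
    ∫ t in (1/6:ℝ)..(5/6), (Real.log (2 * Real.sin (π * t)))^2 = π^2 / 54 := by
  calc ∫ t in (1/6:ℝ)..(5/6), (Real.log (2 * Real.sin (π * t)))^2
      = ∫ t in (1/6:ℝ)..(5/6), Real.log (2 * Real.cos (π * t - π / 2)) ^ 2 := by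
        simp only [Real.cos_sub_pi_div_two]
    _ = π⁻¹ * ∫ θ in -(π / 3)..π / 3, Real.log (2 * Real.cos θ) ^ 2 := by
        rw [intervalIntegral.integral_comp_mul_sub (fun θ ↦ Real.log (2 * Real.cos θ) ^ 2)
          Real.pi_ne_zero, smul_eq_mul]
        congr 2 <;> ring
    _ = π ^ 2 / 54 := by
        rw [integral_log_two_mul_cos_sq]
        field_simp
end

section
/- $\int_0^{\pi/3}\theta\log^2(2\sin(\theta/2))\,d\theta = \frac{17}{6480}\pi^4$. -/
open Real

/-!
For `0 ≤ θ ≤ π / 3` the point `w = 1 - exp (i θ)` lies in the closed unit disc, with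
`log (1 - w) = i θ` and `log w = log (2 sin (θ / 2)) + i (θ - π) / 2`. Hence, up to a polynomial in
`θ`, the integral is the real part of the primitive of `log (1 - w) log² w / (1 - w)` along this
arc. Integrating by parts relates this primitive to the primitive `F` of `log z log² (1 - z) / z`,
for which the double series of `log² (1 - z)` gives a formula continuous up to the unit circle.

The substitution `z ↦ 1 - z` exchanges the two integrands, which yields a functional equation for
`F`. At `z = exp (i π / 3)` it exchanges `z` and its complex conjugate, so it determines `Re F z`
from `F 1 = -∑ 1 / (m n (m + n)²)`. The two evaluations of `ζ(2)²`, by stuffle and by shuffle, give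
this sum.
-/

open Asymptotics Filter Metric MeasureTheory Set Topology

section Trichotomy

variable {α : Type*} [AddCommMonoid α] [TopologicalSpace α] {f : ℕ × ℕ → α} {a b c : α}

theorem hasSum_subtype_diag (h : HasSum (fun n ↦ f (n, n)) a) :
    HasSum (fun p : {p : ℕ × ℕ | p.1 = p.2} ↦ f p) a := by
  let g : ℕ → ℕ × ℕ := fun n ↦ (n, n)
  have hinj : g.Injective := fun _ _ h ↦ congrArg Prod.fst h
  have hrange : range g = {p | p.1 = p.2} := by
    ext ⟨m, n⟩
    simp [g]
  exact hrange ▸ hinj.hasSum_range_iff.2 h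

theorem hasSum_subtype_fst_lt_snd (h : HasSum (fun p : ℕ × ℕ ↦ f (p.1, p.1 + p.2 + 1)) b) :
    HasSum (fun p : {p : ℕ × ℕ | p.1 < p.2} ↦ f p) b := by
  let g : ℕ × ℕ → ℕ × ℕ := fun p ↦ (p.1, p.1 + p.2 + 1)
  have hinj : g.Injective := by
    rintro ⟨m, k⟩ ⟨n, l⟩ h
    simp only [g, Prod.mk.injEq] at h ⊢
    lia
  have hrange : range g = {p | p.1 < p.2} := by
    ext ⟨m, n⟩
    simp only [g, mem_range, Prod.exists, Prod.mk.injEq, mem_ofPred_eq]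
    exact ⟨by lia, fun h ↦ ⟨m, n - m - 1, rfl, by lia⟩⟩
  exact hrange ▸ hinj.hasSum_range_iff.2 h

theorem hasSum_subtype_snd_lt_fst (h : HasSum (fun p : ℕ × ℕ ↦ f (p.1 + p.2 + 1, p.1)) c) :
    HasSum (fun p : {p : ℕ × ℕ | p.2 < p.1} ↦ f p) c := by
  let g : ℕ × ℕ → ℕ × ℕ := fun p ↦ (p.1 + p.2 + 1, p.1)
  have hinj : g.Injective := by
    rintro ⟨m, k⟩ ⟨n, l⟩ h
    simp only [g, Prod.mk.injEq] at h ⊢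
    lia
  have hrange : range g = {p | p.2 < p.1} := by
    ext ⟨m, n⟩
    simp only [g, mem_range, Prod.exists, Prod.mk.injEq, mem_ofPred_eq]
    exact ⟨by lia, fun h ↦ ⟨n, m - n - 1, by lia, rfl⟩⟩
  exact hrange ▸ hinj.hasSum_range_iff.2 h

theorem hasSum_prod_of_diag_of_offDiag [ContinuousAdd α] (hdiag : HasSum (fun n ↦ f (n, n)) a)
    (hlt : HasSum (fun p : ℕ × ℕ ↦ f (p.1, p.1 + p.2 + 1)) b)
    (hgt : HasSum (fun p : ℕ × ℕ ↦ f (p.1 + p.2 + 1, p.1)) c) :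
    HasSum f (a + (b + c)) := by
  have hdisj : Disjoint {p : ℕ × ℕ | p.1 < p.2} {p | p.2 < p.1} :=
    Set.disjoint_left.2 fun p (h : p.1 < p.2) ↦ h.not_gt
  have hcompl : IsCompl {p : ℕ × ℕ | p.1 = p.2} ({p | p.1 < p.2} ∪ {p | p.2 < p.1}) := by
    rw [← compl_eq_iff_isCompl]
    ext p
    exact ne_iff_lt_or_gt
  exact (hasSum_subtype_diag hdiag).add_isCompl hcompl
    ((hasSum_subtype_fst_lt_snd hlt).add_disjoint hdisj (hasSum_subtype_snd_lt_fst hgt))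

end Trichotomy

theorem hasSum_one_div_succ_sq : HasSum (fun n : ℕ ↦ 1 / ((n : ℝ) + 1) ^ 2) (π ^ 2 / 6) := by
  simpa using (hasSum_nat_add_iff' 1).2 hasSum_zeta_two

theorem hasSum_one_div_succ_pow_four :
    HasSum (fun n : ℕ ↦ 1 / ((n : ℝ) + 1) ^ 4) (π ^ 4 / 90) := by
  simpa using (hasSum_nat_add_iff' 1).2 hasSum_zeta_four

theorem hasSum_one_div_succ_sq_mul_one_div_succ_sq :
    HasSum (fun p : ℕ × ℕ ↦ 1 / ((p.1 : ℝ) + 1) ^ 2 * (1 / ((p.2 : ℝ) + 1) ^ 2)) (π ^ 4 / 36) := by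
  have hsum := hasSum_one_div_succ_sq.summable
  have hnonneg : 0 ≤ fun n : ℕ ↦ 1 / ((n : ℝ) + 1) ^ 2 := fun n ↦ by positivity
  have hprod := hsum.mul_of_nonneg hsum hnonneg hnonneg
  have hmul := hasSum_one_div_succ_sq.mul hasSum_one_div_succ_sq hprod
  rwa [show π ^ 2 / 6 * (π ^ 2 / 6) = π ^ 4 / 36 by ring] at hmul

-- The stuffle relation `ζ(2)² = ζ(4) + 2 ζ(2, 2)`.
theorem hasSum_zeta_two_two :
    HasSum (fun p : ℕ × ℕ ↦ 1 / ((p.1 : ℝ) + 1) ^ 2 * (1 / ((p.1 : ℝ) + p.2 + 2) ^ 2))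
      (π ^ 4 / 120) := by
  obtain ⟨A, hA⟩ : Summable fun p : ℕ × ℕ ↦
      1 / ((p.1 : ℝ) + 1) ^ 2 * (1 / ((p.1 : ℝ) + p.2 + 2) ^ 2) := by
    refine .of_nonneg_of_le (fun p ↦ by positivity) (fun p ↦ ?_)
      hasSum_one_div_succ_sq_mul_one_div_succ_sq.summable
    gcongr
    · exact le_add_of_nonneg_left p.1.cast_nonneg
    · norm_num
  have hcast (m n : ℕ) : ((m + n + 1 : ℕ) : ℝ) + 1 = m + n + 2 := by
    push_cast
    ring
  have hstuffle := hasSum_prod_of_diag_of_offDiag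
    (f := fun p : ℕ × ℕ ↦ 1 / ((p.1 : ℝ) + 1) ^ 2 * (1 / ((p.2 : ℝ) + 1) ^ 2))
    (by simpa only [one_div_mul_one_div, ← pow_add] using hasSum_one_div_succ_pow_four)
    (by simpa only [hcast] using hA)
    (by simpa only [hcast, mul_comm] using hA)
  have hval := hasSum_one_div_succ_sq_mul_one_div_succ_sq.unique hstuffle
  rwa [show A = π ^ 4 / 120 by linarith] at hA

/-- The coefficients of the Mordell–Tornheim polylogarithm of exponents `(1, 1, s)`. The summation
indices are shifted so as to start at `0`. -/
noncomputable def tornheimCoeff (s : ℕ) (p : ℕ × ℕ) : ℝ :=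
  1 / ((p.1 + 1) * (p.2 + 1) * (p.1 + p.2 + 2) ^ s)

-- The shuffle relation: sum the expansion
-- `1 / (a² b²) = 1 / (a² (a + b)²) + 1 / (b² (a + b)²) + 2 / (a b (a + b)²)`
-- over `a, b ≥ 1`.
theorem hasSum_tornheimCoeff_two : HasSum (tornheimCoeff 2) (π ^ 4 / 180) := by
  have hswap := (Equiv.prodComm ℕ ℕ).hasSum_iff.2 hasSum_zeta_two_two
  have hshuffle := ((hasSum_one_div_succ_sq_mul_one_div_succ_sq.sub hasSum_zeta_two_two).sub
    hswap).div_const 2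
  rw [show (π ^ 4 / 36 - π ^ 4 / 120 - π ^ 4 / 120) / 2 = π ^ 4 / 180 by ring] at hshuffle
  refine hshuffle.congr_fun fun p ↦ ?_
  simp only [tornheimCoeff, Function.comp_apply, Equiv.prodComm_apply, Prod.fst_swap, Prod.snd_swap]
  field_simp
  ring

theorem tornheimCoeff_nonneg (s : ℕ) (p : ℕ × ℕ) : 0 ≤ tornheimCoeff s p := by
  rw [tornheimCoeff]
  positivity

theorem tornheimCoeff_le_one (s : ℕ) (p : ℕ × ℕ) : tornheimCoeff s p ≤ 1 := by
  refine div_le_one_of_le₀ ?_ (by positivity)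
  have hfst : (1 : ℝ) ≤ p.1 + 1 := le_add_of_nonneg_left p.1.cast_nonneg
  have hsnd : (1 : ℝ) ≤ p.2 + 1 := le_add_of_nonneg_left p.2.cast_nonneg
  exact one_le_mul_of_one_le_of_one_le (one_le_mul_of_one_le_of_one_le hfst hsnd)
    (one_le_pow₀ (by linarith))

theorem tornheimCoeff_succ_mul (s : ℕ) (p : ℕ × ℕ) :
    tornheimCoeff (s + 1) p * (p.1 + p.2 + 2) = tornheimCoeff s p := by
  rw [tornheimCoeff, tornheimCoeff]
  field

theorem tornheimCoeff_succ_le (s : ℕ) (p : ℕ × ℕ) :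
    tornheimCoeff (s + 1) p ≤
      1 / |(p.1 : ℝ) + 1| ^ (3 / 2 : ℝ) * (1 / |(p.2 : ℝ) + 1| ^ (3 / 2 : ℝ)) := by
  have hpow {a : ℝ} (ha : 0 < a) : |a| ^ (3 / 2 : ℝ) = a * √a := by
    rw [abs_of_pos ha, sqrt_eq_rpow, ← rpow_one_add' ha.le (by norm_num)]
    norm_num
  have ha : (0 : ℝ) < p.1 + 1 := by positivity
  have hb : (0 : ℝ) < p.2 + 1 := by positivity
  rw [hpow ha, hpow hb, one_div_mul_one_div, tornheimCoeff]
  refine one_div_le_one_div_of_le (by positivity) ?_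
  have hAMGM : √(p.1 + 1 : ℝ) * √(p.2 + 1 : ℝ) ≤ p.1 + p.2 + 2 := by
    nlinarith [two_mul_le_add_sq √(p.1 + 1 : ℝ) √(p.2 + 1 : ℝ), sq_sqrt ha.le, sq_sqrt hb.le]
  calc (p.1 + 1) * √(p.1 + 1 : ℝ) * ((p.2 + 1) * √(p.2 + 1 : ℝ))
      = (p.1 + 1) * (p.2 + 1) * (√(p.1 + 1 : ℝ) * √(p.2 + 1 : ℝ)) := by ring
    _ ≤ (p.1 + 1) * (p.2 + 1) * (p.1 + p.2 + 2) := by gcongr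
    _ ≤ (p.1 + 1) * (p.2 + 1) * (p.1 + p.2 + 2) ^ (s + 1) := by
      gcongr
      exact le_self_pow₀ (by linarith) s.succ_ne_zero

theorem summable_tornheimCoeff_succ (s : ℕ) : Summable (tornheimCoeff (s + 1)) := by
  have hrpow : Summable fun n : ℕ ↦ 1 / |(n : ℝ) + 1| ^ (3 / 2 : ℝ) :=
    (summable_one_div_nat_add_rpow 1 _).2 (by norm_num)
  have hnonneg : 0 ≤ fun n : ℕ ↦ 1 / |(n : ℝ) + 1| ^ (3 / 2 : ℝ) := fun n ↦ by positivity
  exact (hrpow.mul_of_nonneg hrpow hnonneg hnonneg).of_nonneg_of_le (tornheimCoeff_nonneg _)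
    (tornheimCoeff_succ_le s)

/-- The Mordell–Tornheim polylogarithm
`∑ z ^ (m + n) / (m n (m + n) ^ s)`, the sum being over `m, n ≥ 1`. -/
noncomputable def tornheimPolylog (s : ℕ) (z : ℂ) : ℂ :=
  ∑' p : ℕ × ℕ, (tornheimCoeff s p : ℂ) * z ^ (p.1 + p.2 + 2)

theorem tornheimPolylog_apply_zero (s : ℕ) : tornheimPolylog s 0 = 0 := by
  simp [tornheimPolylog]

theorem tornheimPolylog_two_one : tornheimPolylog 2 1 = π ^ 4 / 180 := by
  simp only [tornheimPolylog, one_pow, mul_one]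
  exact_mod_cast (Complex.hasSum_ofReal.2 hasSum_tornheimCoeff_two).tsum_eq

theorem tornheimPolylog_conj (s : ℕ) (z : ℂ) :
    tornheimPolylog s (starRingEnd ℂ z) = starRingEnd ℂ (tornheimPolylog s z) := by
  simp only [tornheimPolylog, Complex.conj_tsum, map_mul, map_pow, Complex.conj_ofReal]

theorem norm_tornheimCoeff_mul (s : ℕ) (p : ℕ × ℕ) (w : ℂ) :
    ‖(tornheimCoeff s p : ℂ) * w‖ = tornheimCoeff s p * ‖w‖ := by
  rw [norm_mul, Complex.norm_of_nonneg (tornheimCoeff_nonneg s p)]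

theorem norm_tornheimCoeff_mul_pow_le (s : ℕ) (p : ℕ × ℕ) {z : ℂ} (hz : ‖z‖ ≤ 1) (k : ℕ) :
    ‖(tornheimCoeff s p : ℂ) * z ^ k‖ ≤ tornheimCoeff s p := by
  rw [norm_tornheimCoeff_mul, norm_pow]
  exact mul_le_of_le_one_right (tornheimCoeff_nonneg s p) (pow_le_one₀ (norm_nonneg z) hz)

theorem continuousOn_tornheimPolylog_succ (s : ℕ) :
    ContinuousOn (tornheimPolylog (s + 1)) (closedBall 0 1) := by
  unfold tornheimPolylog
  refine continuousOn_tsum (fun p ↦ ?_) (summable_tornheimCoeff_succ s) fun p z hz ↦ ?_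
  · exact (continuous_const.mul (continuous_pow _)).continuousOn
  · exact norm_tornheimCoeff_mul_pow_le _ p (mem_closedBall_zero_iff.1 hz) _

theorem tornheimPolylog_zero {z : ℂ} (hz : ‖z‖ < 1) :
    tornheimPolylog 0 z = Complex.log (1 - z) ^ 2 := by
  have hlog := Complex.hasSum_taylorSeries_neg_log' hz
  have hnorm : Summable fun n : ℕ ↦ ‖z ^ (n + 1) / (n + 1 : ℂ)‖ := hlog.summable.norm
  rw [← neg_sq, ← hlog.tsum_eq, sq, tsum_mul_tsum_of_summable_norm hnorm hnorm, tornheimPolylog]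
  refine tsum_congr fun p ↦ ?_
  rw [tornheimCoeff]
  push_cast
  field

-- At `z = 0` the derivative is `0`, as is the quotient by convention.
theorem hasDerivAt_tornheimPolylog_succ (s : ℕ) {z : ℂ} (hz : ‖z‖ < 1) :
    HasDerivAt (tornheimPolylog (s + 1)) (tornheimPolylog s z / z) z := by
  obtain ⟨r, hzr, hr⟩ := exists_between hz
  have hr₀ : 0 ≤ r := (norm_nonneg z).trans hzr.le
  have hgeom : Summable fun p : ℕ × ℕ ↦ r ^ p.1 * r ^ p.2 :=
    (summable_geometric_of_lt_one hr₀ hr).mul_of_nonneg (summable_geometric_of_lt_one hr₀ hr)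
      (fun n ↦ by positivity) (fun n ↦ by positivity)
  have hterm (p : ℕ × ℕ) (w : ℂ) :
      HasDerivAt (fun w ↦ (tornheimCoeff (s + 1) p : ℂ) * w ^ (p.1 + p.2 + 2))
        (tornheimCoeff s p * w ^ (p.1 + p.2 + 1)) w := by
    refine ((hasDerivAt_pow (p.1 + p.2 + 2) w).const_mul _).congr_deriv ?_
    rw [← tornheimCoeff_succ_mul s p, show p.1 + p.2 + 2 - 1 = p.1 + p.2 + 1 from rfl]
    push_cast
    ring
  have hbound (p : ℕ × ℕ) (w : ℂ) (hw : w ∈ ball 0 r) :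
      ‖(tornheimCoeff s p : ℂ) * w ^ (p.1 + p.2 + 1)‖ ≤ r ^ p.1 * r ^ p.2 := by
    have hwr : ‖w‖ ≤ r := (mem_ball_zero_iff.1 hw).le
    rw [norm_tornheimCoeff_mul, norm_pow, ← pow_add]
    calc tornheimCoeff s p * ‖w‖ ^ (p.1 + p.2 + 1) ≤ 1 * r ^ (p.1 + p.2 + 1) := by
          gcongr
          exact tornheimCoeff_le_one s p
      _ ≤ r ^ (p.1 + p.2) := by
        rw [one_mul]
        exact pow_le_pow_of_le_one hr₀ hr.le (Nat.le_succ _)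
  have hzero : Summable fun p : ℕ × ℕ ↦
      (tornheimCoeff (s + 1) p : ℂ) * (0 : ℂ) ^ (p.1 + p.2 + 2) := by simp
  refine (hasDerivAt_tsum_of_isPreconnected hgeom isOpen_ball (convex_ball 0 r).isPreconnected
    (fun p w _ ↦ hterm p w) hbound (mem_ball_self ((norm_nonneg z).trans_lt hzr)) hzero
    (mem_ball_zero_iff.2 hzr)).congr_deriv ?_
  rw [tornheimPolylog, ← tsum_div_const]
  refine tsum_congr fun p ↦ ?_
  rcases eq_or_ne z 0 with rfl | hz₀
  · simp
  · field

theorem tendsto_log_mul_self_zero : Tendsto (fun z : ℂ ↦ Complex.log z * z) (𝓝 0) (𝓝 0) := by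
  have hlim : Tendsto (fun z : ℂ ↦ |‖z‖ * log ‖z‖| + π * ‖z‖) (𝓝 0) (𝓝 0) := by
    have hcont : Continuous fun z : ℂ ↦ |‖z‖ * log ‖z‖| + π * ‖z‖ :=
      (continuous_mul_log.comp continuous_norm).abs.add (continuous_norm.const_mul π)
    simpa using hcont.tendsto 0
  refine squeeze_zero_norm (fun z ↦ ?_) hlim
  have hlog : ‖Complex.log z‖ ≤ |log ‖z‖| + π := by
    refine (Complex.norm_le_abs_re_add_abs_im _).trans ?_
    rw [Complex.log_re, Complex.log_im]
    gcongr
    exact Complex.abs_arg_le_pi z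
  calc ‖Complex.log z * z‖ ≤ (|log ‖z‖| + π) * ‖z‖ := by rw [norm_mul]; gcongr
    _ = |‖z‖ * log ‖z‖| + π * ‖z‖ := by rw [abs_mul, abs_norm]; ring

theorem continuousAt_log_mul_zero {g : ℂ → ℂ} (hg : DifferentiableAt ℂ g 0) (hg₀ : g 0 = 0) :
    ContinuousAt (fun z ↦ Complex.log z * g z) 0 := by
  have hO : g =O[𝓝 0] fun z ↦ z := by simpa [hg₀] using hg.isBigO_sub
  have hlim := ((isBigO_refl Complex.log (𝓝 0)).mul hO).trans_tendsto tendsto_log_mul_self_zero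
  simpa [ContinuousAt] using hlim

theorem hasDerivAt_log_one_sub {z : ℂ} (hz : 1 - z ∈ Complex.slitPlane) :
    HasDerivAt (fun w ↦ Complex.log (1 - w)) (-1 / (1 - z)) z :=
  ((hasDerivAt_id z).const_sub 1).clog hz

theorem one_sub_mem_slitPlane {z : ℂ} (hz : ‖z‖ < 1) : 1 - z ∈ Complex.slitPlane := by
  simpa only [sub_eq_add_neg] using
    Complex.mem_slitPlane_of_norm_lt_one ((norm_neg z).trans_lt hz)

/-- The primitive of `log z * log (1 - z) ^ 2 / z` vanishing at `0`. -/
noncomputable def logPrimitive (z : ℂ) : ℂ :=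
  Complex.log z * tornheimPolylog 1 z - tornheimPolylog 2 z

/-- The primitive of `log (1 - z) * log z ^ 2 / (1 - z)` vanishing at `0`, obtained from
`logPrimitive` by integrating by parts. -/
noncomputable def logPrimitiveDual (z : ℂ) : ℂ :=
  logPrimitive z - (Complex.log z * Complex.log (1 - z)) ^ 2 / 2

theorem logPrimitive_one : logPrimitive 1 = -(π ^ 4 / 180) := by
  simp [logPrimitive, tornheimPolylog_two_one]

theorem logPrimitiveDual_zero : logPrimitiveDual 0 = 0 := by
  simp [logPrimitiveDual, logPrimitive, tornheimPolylog_apply_zero]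

theorem logPrimitive_conj {z : ℂ} (hz : z ∈ Complex.slitPlane) :
    logPrimitive (starRingEnd ℂ z) = starRingEnd ℂ (logPrimitive z) := by
  simp only [logPrimitive, tornheimPolylog_conj,
    Complex.log_conj z (Complex.slitPlane_arg_ne_pi hz), map_sub, map_mul]

theorem hasDerivAt_logPrimitive {z : ℂ} (hz : ‖z‖ < 1) (hz' : z ∈ Complex.slitPlane) :
    HasDerivAt logPrimitive (Complex.log z * Complex.log (1 - z) ^ 2 / z) z := by
  refine (((Complex.hasDerivAt_log hz').mul (hasDerivAt_tornheimPolylog_succ 0 hz)).sub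
    (hasDerivAt_tornheimPolylog_succ 1 hz)).congr_deriv ?_
  rw [tornheimPolylog_zero hz, zero_add]
  ring

theorem hasDerivAt_logPrimitiveDual {z : ℂ} (hz : ‖z‖ < 1) (hz' : z ∈ Complex.slitPlane) :
    HasDerivAt logPrimitiveDual (Complex.log (1 - z) * Complex.log z ^ 2 / (1 - z)) z := by
  refine ((hasDerivAt_logPrimitive hz hz').sub ((((Complex.hasDerivAt_log hz').mul
    (hasDerivAt_log_one_sub (one_sub_mem_slitPlane hz))).pow 2).div_const 2)).congr_deriv ?_
  simp only [Nat.cast_ofNat, Nat.add_one_sub_one, pow_one, Pi.mul_apply]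
  ring

/-- The intersection of the closed unit discs about `0` and `1`, on which both `log z` and
`log (1 - z)` are holomorphic away from the endpoints `0` and `1`. -/
def lens : Set ℂ := closedBall 0 1 ∩ closedBall 1 1

theorem mem_lens {z : ℂ} : z ∈ lens ↔ ‖z‖ ≤ 1 ∧ ‖1 - z‖ ≤ 1 := by
  rw [lens, mem_inter_iff, mem_closedBall_zero_iff, mem_closedBall', dist_eq_norm]

theorem one_sub_mem_lens {z : ℂ} (hz : z ∈ lens) : 1 - z ∈ lens := by
  rw [mem_lens, sub_sub_cancel]
  exact (mem_lens.1 hz).symm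

theorem mem_interior_lens {z : ℂ} : z ∈ interior lens ↔ ‖z‖ < 1 ∧ ‖1 - z‖ < 1 := by
  rw [lens, interior_inter, interior_closedBall _ one_ne_zero, interior_closedBall _ one_ne_zero,
    mem_inter_iff, mem_ball_zero_iff, mem_ball', dist_eq_norm]

theorem convex_lens : Convex ℝ lens := (convex_closedBall 0 1).inter (convex_closedBall 1 1)

theorem closure_interior_lens : closure (interior lens) = lens := by
  have hmem : (1 / 2 : ℂ) ∈ interior lens := by norm_num [mem_interior_lens]
  rw [convex_lens.closure_interior_eq_closure_of_nonempty_interior ⟨_, hmem⟩]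
  exact (isClosed_closedBall.inter isClosed_closedBall).closure_eq

theorem mem_slitPlane_of_mem_lens {z : ℂ} (hz : z ∈ lens) (hz₀ : z ≠ 0) :
    z ∈ Complex.slitPlane := by
  have hre : |1 - z.re| ≤ 1 := by
    simpa using (Complex.abs_re_le_norm (1 - z)).trans (mem_lens.1 hz).2
  rw [abs_le] at hre
  by_contra h_notMem
  obtain ⟨hre_nonpos, him⟩ : z.re ≤ 0 ∧ z.im = 0 := by
    simpa [Complex.mem_slitPlane_iff] using h_notMem
  exact hz₀ (Complex.ext (by linarith [Complex.zero_re]) him)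

theorem continuousOn_logPrimitive : ContinuousOn logPrimitive lens := by
  have hpolylog (s : ℕ) : ContinuousOn (tornheimPolylog (s + 1)) lens :=
    (continuousOn_tornheimPolylog_succ s).mono inter_subset_left
  refine ContinuousOn.sub (fun z hz ↦ ?_) (hpolylog 1)
  rcases eq_or_ne z 0 with rfl | hz₀
  · exact (continuousAt_log_mul_zero
      (hasDerivAt_tornheimPolylog_succ 0 (by simp)).differentiableAt
      (tornheimPolylog_apply_zero 1)).continuousWithinAt
  · exact (continuousAt_clog (mem_slitPlane_of_mem_lens hz hz₀)).continuousWithinAt.mul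
      (hpolylog 0 z hz)

theorem continuousOn_log_mul_log_one_sub :
    ContinuousOn (fun z ↦ Complex.log z * Complex.log (1 - z)) lens := by
  have hzero : ContinuousAt (fun z ↦ Complex.log z * Complex.log (1 - z)) 0 :=
    continuousAt_log_mul_zero (hasDerivAt_log_one_sub (by simp)).differentiableAt (by simp)
  intro z hz
  refine ContinuousAt.continuousWithinAt ?_
  rcases eq_or_ne z 0 with rfl | hz₀
  · exact hzero
  rcases eq_or_ne z 1 with rfl | hz₁
  · have hone := ContinuousAt.comp_of_eq (g := fun z ↦ Complex.log z * Complex.log (1 - z))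
      (f := fun z : ℂ ↦ 1 - z) hzero (by fun_prop) (sub_self (1 : ℂ))
    simpa [Function.comp_def, mul_comm] using hone
  · have hslit := mem_slitPlane_of_mem_lens (one_sub_mem_lens hz) (sub_ne_zero.2 hz₁.symm)
    exact (continuousAt_clog (mem_slitPlane_of_mem_lens hz hz₀)).mul
      (hasDerivAt_log_one_sub hslit).continuousAt

theorem continuousOn_logPrimitiveDual : ContinuousOn logPrimitiveDual lens :=
  continuousOn_logPrimitive.sub ((continuousOn_log_mul_log_one_sub.pow 2).div_const 2)

theorem hasDerivAt_logPrimitiveDual_add_logPrimitive_one_sub {z : ℂ} (hz : z ∈ interior lens) :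
    HasDerivAt (fun w ↦ logPrimitiveDual w + logPrimitive (1 - w)) 0 z := by
  obtain ⟨hz₀, hz₁⟩ := mem_interior_lens.1 hz
  have hslit : z ∈ Complex.slitPlane := by simpa using one_sub_mem_slitPlane hz₁
  have hrefl : HasDerivAt (fun w ↦ logPrimitive (1 - w)) _ z :=
    (hasDerivAt_logPrimitive hz₁ (one_sub_mem_slitPlane hz₀)).comp_const_sub 1 z
  refine ((hasDerivAt_logPrimitiveDual hz₀ hslit).add hrefl).congr_deriv ?_
  rw [sub_sub_cancel, add_neg_cancel]

theorem logPrimitiveDual_add_logPrimitive_one_sub {z : ℂ} (hz : z ∈ lens) :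
    logPrimitiveDual z + logPrimitive (1 - z) = -(π ^ 4 / 180) := by
  set S : ℂ → ℂ := fun w ↦ logPrimitiveDual w + logPrimitive (1 - w)
  have hcont : ContinuousOn S lens := continuousOn_logPrimitiveDual.add
    (continuousOn_logPrimitive.comp (by fun_prop) fun w ↦ one_sub_mem_lens)
  have hderiv (w : ℂ) (hw : w ∈ interior lens) : HasDerivAt S 0 w :=
    hasDerivAt_logPrimitiveDual_add_logPrimitive_one_sub hw
  obtain ⟨c, hc⟩ := isOpen_interior.exists_is_const_of_deriv_eq_zero
    convex_lens.interior.isPreconnected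
    (fun w hw ↦ (hderiv w hw).differentiableAt.differentiableWithinAt)
    fun w hw ↦ (hderiv w hw).deriv
  have hconst : EqOn S (fun _ ↦ c) lens :=
    EqOn.of_subset_closure hc hcont continuousOn_const interior_subset closure_interior_lens.ge
  have hzero : (0 : ℂ) ∈ lens := by simp [mem_lens]
  calc S z = S 0 := (hconst hz).trans (hconst hzero).symm
    _ = -(π ^ 4 / 180) := by simp [S, logPrimitiveDual_zero, logPrimitive_one]

theorem one_sub_exp_mul_I (θ : ℝ) :
    1 - Complex.exp (θ * Complex.I) =
      (2 * sin (θ / 2) : ℝ) * Complex.exp (((θ - π) / 2 : ℝ) * Complex.I) := by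
  have hshift : (((θ - π) / 2 : ℝ) : ℂ) * Complex.I = θ / 2 * Complex.I - π / 2 * Complex.I := by
    push_cast
    ring
  have hneg : -(θ / 2) * Complex.I + θ / 2 * Complex.I = 0 := by ring
  have hdouble : θ / 2 * Complex.I + θ / 2 * Complex.I = θ * Complex.I := by ring
  rw [hshift, Complex.exp_sub, Complex.exp_pi_div_two_mul_I]
  push_cast
  rw [Complex.two_sin, mul_assoc, mul_div_cancel₀ _ Complex.I_ne_zero, sub_mul, ← Complex.exp_add,
    ← Complex.exp_add, hneg, hdouble, Complex.exp_zero]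

theorem log_exp_mul_I {θ : ℝ} (h₀ : -π < θ) (h₁ : θ ≤ π) :
    Complex.log (Complex.exp (θ * Complex.I)) = θ * Complex.I :=
  Complex.log_exp (by simpa) (by simpa)

theorem log_one_sub_exp_mul_I {θ : ℝ} (h₀ : 0 < θ) (h₁ : θ < 2 * π) :
    Complex.log (1 - Complex.exp (θ * Complex.I)) =
      log (2 * sin (θ / 2)) + ((θ - π) / 2 : ℝ) * Complex.I := by
  have hsin : 0 < 2 * sin (θ / 2) :=
    mul_pos two_pos (sin_pos_of_pos_of_lt_pi (by linarith) (by linarith))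
  rw [one_sub_exp_mul_I, Complex.log_ofReal_mul hsin (Complex.exp_ne_zero _),
    log_exp_mul_I (by linarith) (by linarith)]

theorem norm_one_sub_exp_mul_I (θ : ℝ) :
    ‖1 - Complex.exp (θ * Complex.I)‖ = |2 * sin (θ / 2)| := by
  rw [norm_sub_rev, mul_comm, Complex.norm_exp_I_mul_ofReal_sub_one, norm_eq_abs]

theorem norm_one_sub_exp_mul_I_lt_one {θ : ℝ} (h₀ : 0 ≤ θ) (h₁ : θ < π / 3) :
    ‖1 - Complex.exp (θ * Complex.I)‖ < 1 := by
  have hsin : sin (θ / 2) < 1 / 2 := by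
    rw [← sin_pi_div_six]
    exact sin_lt_sin_of_lt_of_le_pi_div_two (by linarith) (by linarith) (by linarith)
  have hsin₀ : 0 ≤ sin (θ / 2) := sin_nonneg_of_nonneg_of_le_pi (by linarith) (by linarith)
  rw [norm_one_sub_exp_mul_I, abs_of_nonneg (by positivity)]
  linarith

theorem one_sub_exp_pi_div_three_mul_I :
    1 - Complex.exp ((π / 3 : ℝ) * Complex.I) =
      starRingEnd ℂ (Complex.exp ((π / 3 : ℝ) * Complex.I)) := by
  rw [one_sub_exp_mul_I, ← Complex.exp_conj, map_mul, Complex.conj_ofReal, Complex.conj_I,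
    show π / 3 / 2 = π / 6 by ring, sin_pi_div_six]
  push_cast
  ring_nf

theorem one_sub_exp_mul_I_mem_lens {θ : ℝ} (h₀ : 0 ≤ θ) (h₁ : θ ≤ π / 3) :
    1 - Complex.exp (θ * Complex.I) ∈ lens := by
  rw [mem_lens, sub_sub_cancel, Complex.norm_exp_ofReal_mul_I]
  refine ⟨?_, le_rfl⟩
  rcases h₁.eq_or_lt with rfl | h₁
  · rw [one_sub_exp_pi_div_three_mul_I, Complex.norm_conj, Complex.norm_exp_ofReal_mul_I]
  · exact (norm_one_sub_exp_mul_I_lt_one h₀ h₁).le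

theorem re_logPrimitiveDual_one_sub_exp_pi_div_three_mul_I :
    (logPrimitiveDual (1 - Complex.exp ((π / 3 : ℝ) * Complex.I))).re = -(19 * π ^ 4 / 3240) := by
  have hlens := one_sub_exp_mul_I_mem_lens (by positivity) (le_refl (π / 3))
  have hlog := log_exp_mul_I (θ := π / 3) (by linarith [pi_pos]) (by linarith [pi_pos])
  have hconj := one_sub_exp_pi_div_three_mul_I
  set ω : ℂ := Complex.exp ((π / 3 : ℝ) * Complex.I)
  have hω : 1 - starRingEnd ℂ ω = ω := by rw [← hconj, sub_sub_cancel]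
  have hslit : ω ∈ Complex.slitPlane :=
    mem_slitPlane_of_mem_lens (by simpa using one_sub_mem_lens hlens) (Complex.exp_ne_zero _)
  have hlogs : Complex.log (starRingEnd ℂ ω) * Complex.log ω = (π ^ 2 / 9 : ℝ) := by
    rw [Complex.log_conj ω (Complex.slitPlane_arg_ne_pi hslit), hlog, map_mul,
      Complex.conj_ofReal, Complex.conj_I]
    push_cast
    linear_combination -(π : ℂ) ^ 2 / 9 * Complex.I_sq
  have hdual : (logPrimitiveDual (starRingEnd ℂ ω)).re = (logPrimitive ω).re - π ^ 4 / 162 := by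
    rw [logPrimitiveDual, hω, hlogs, logPrimitive_conj hslit]
    norm_cast
    rw [Complex.sub_re, Complex.conj_re, Complex.ofReal_re]
    ring
  have hreflect := congrArg Complex.re (logPrimitiveDual_add_logPrimitive_one_sub hlens)
  rw [hconj, hω, Complex.add_re] at hreflect
  norm_cast at hreflect
  rw [hconj]
  linarith

theorem hasDerivAt_re_logPrimitiveDual_arc {θ : ℝ} (h₀ : 0 < θ) (h₁ : θ < π / 3) :
    HasDerivAt (fun t : ℝ ↦ (logPrimitiveDual (1 - Complex.exp (t * Complex.I))).re)
      (θ * log (2 * sin (θ / 2)) ^ 2 - θ * (θ - π) ^ 2 / 4) θ := by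
  have hsin : 0 < sin (θ / 2) := sin_pos_of_pos_of_lt_pi (by linarith) (by linarith)
  have hne₀ : 1 - Complex.exp (θ * Complex.I) ≠ 0 := by
    rw [← norm_pos_iff, norm_one_sub_exp_mul_I]
    positivity
  have hslit := mem_slitPlane_of_mem_lens (one_sub_exp_mul_I_mem_lens h₀.le h₁.le) hne₀
  have hexp : HasDerivAt (fun ζ : ℂ ↦ 1 - Complex.exp (ζ * Complex.I))
      (-(Complex.exp (θ * Complex.I) * Complex.I)) θ := by
    simpa using ((hasDerivAt_mul_const Complex.I).cexp).const_sub 1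
  have harc : HasDerivAt (fun ζ : ℂ ↦ logPrimitiveDual (1 - Complex.exp (ζ * Complex.I)))
      (θ * (log (2 * sin (θ / 2)) + ((θ - π) / 2 : ℝ) * Complex.I) ^ 2) θ := by
    refine ((hasDerivAt_logPrimitiveDual (norm_one_sub_exp_mul_I_lt_one h₀.le h₁) hslit).comp
      (θ : ℂ) hexp).congr_deriv ?_
    rw [sub_sub_cancel, log_exp_mul_I (by linarith) (by linarith),
      log_one_sub_exp_mul_I h₀ (by linarith)]
    field_simp
    linear_combination
      -θ * (log (2 * sin (θ / 2)) + ((θ - π) / 2 : ℝ) * Complex.I) ^ 2 * Complex.I_sq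
  refine harc.real_of_complex.congr_deriv ?_
  rw [Complex.re_ofReal_mul, sq, Complex.mul_re, Complex.add_re, Complex.add_im, Complex.ofReal_re,
    Complex.ofReal_im, Complex.mul_I_re, Complex.mul_I_im, Complex.ofReal_re, Complex.ofReal_im]
  ring

theorem integral_mul_sq_log_two_mul_sin_half {θ : ℝ} (h₀ : 0 ≤ θ) (h₁ : θ ≤ π / 3) :
    ∫ t in (0 : ℝ)..θ, t * log (2 * sin (t / 2)) ^ 2 =
      θ ^ 4 / 16 - π * θ ^ 3 / 6 + π ^ 2 * θ ^ 2 / 8 +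
        (logPrimitiveDual (1 - Complex.exp (θ * Complex.I))).re := by
  set G : ℝ → ℝ := fun t ↦ t ^ 4 / 16 - π * t ^ 3 / 6 + π ^ 2 * t ^ 2 / 8 +
    (logPrimitiveDual (1 - Complex.exp (t * Complex.I))).re
  have hG₀ : G 0 = 0 := by simp [G, logPrimitiveDual_zero]
  have hcont : ContinuousOn G (Icc 0 θ) := by
    refine ContinuousOn.add (by fun_prop) (Complex.continuous_re.comp_continuousOn
      (continuousOn_logPrimitiveDual.comp (by fun_prop) fun t ht ↦ ?_))
    exact one_sub_exp_mul_I_mem_lens ht.1 (ht.2.trans h₁)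
  have hderiv (t : ℝ) (ht : t ∈ Ioo 0 θ) : HasDerivAt G (t * log (2 * sin (t / 2)) ^ 2) t := by
    have hpoly : HasDerivAt (fun t : ℝ ↦ t ^ 4 / 16 - π * t ^ 3 / 6 + π ^ 2 * t ^ 2 / 8)
        (t * (t - π) ^ 2 / 4) t := by
      refine (((((hasDerivAt_pow 4 t).div_const 16).sub
        (((hasDerivAt_pow 3 t).const_mul π).div_const 6)).add
        (((hasDerivAt_pow 2 t).const_mul (π ^ 2)).div_const 8))).congr_deriv ?_
      push_cast
      ring
    refine (hpoly.add (hasDerivAt_re_logPrimitiveDual_arc ht.1 (ht.2.trans_le h₁))).congr_deriv ?_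
    ring
  have hint : IntervalIntegrable (fun t ↦ t * log (2 * sin (t / 2)) ^ 2) volume 0 θ := by
    refine intervalIntegral.intervalIntegrable_deriv_of_nonneg (g := G) ?_ ?_ ?_
    · rwa [uIcc_of_le h₀]
    · rwa [min_eq_left h₀, max_eq_right h₀]
    · rw [min_eq_left h₀]
      exact fun t ht ↦ mul_nonneg ht.1.le (sq_nonneg _)
  rw [intervalIntegral.integral_eq_sub_of_hasDerivAt_of_le h₀ hcont hderiv hint, hG₀, sub_zero]

theorem ls4_1_pi_over_3 :
    ∫ θ in (0:ℝ)..(π/3), θ * (Real.log (2 * Real.sin (θ/2)))^2 = 17/6480 * π^4 := by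
  rw [integral_mul_sq_log_two_mul_sin_half (by positivity) le_rfl,
    re_logPrimitiveDual_one_sub_exp_pi_div_three_mul_I]
  ring
end
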